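/- arXiv:1507.07139 — 9 statements merged into one kernel-verified Lean document; each statement's English description precedes it below -/
import Mathlib

section
/- There exist a sequence of real numbers (λ_i)_{i≥0} and continuously differentiable functions (w_i)_{i≥0} on [0,1] such that: λ₀ = 0 and w₀ ≡ 1; 0 < λ₁ < λ₂ ≤ λ₃ ≤ …; each pair (λ_i, w_i) solves the weak Neumann eigenvalue problem for (σ, μ); ∫₀¹ w_i(x) w_k(x) μ(x) dx = 0 whenever i ≠ k; w_i'(0) = w_i'(1) = 0 for every i; after possibly replacing w₁ by −w₁, w₁'(x) > 0 for all x ∈ (0,1), so w₁ is strictly monotone; the derivative w₁' is Hölder continuous of order min(1/2, α); and λ₁ is simple, i.e. every continuously differentiable nonzero solution of the weak Neumann eigenvalue problem with eigenvalue λ₁ is a scalar multiple of w₁. -/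
/-- `u` is continuously differentiable on `[0,1]` with derivative `u'`. -/
def IsC1On01 (u u' : ℝ → ℝ) : Prop :=
  (∀ x ∈ Set.Icc (0:ℝ) 1, HasDerivAt u (u' x) x) ∧ ContinuousOn u' (Set.Icc (0:ℝ) 1)

/-- `(lam, w)` (with derivative `w'`) is a nontrivial solution of the weak Neumann
eigenvalue problem for the pair `(σ, μ)`:
`∫₀¹ w' v' σ² μ = 2 lam ∫₀¹ w v μ` for every `C¹` function `v`. -/
def WeakEigenpair (σ μ : ℝ → ℝ) (lam : ℝ) (w w' : ℝ → ℝ) : Prop :=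
  IsC1On01 w w' ∧ (∃ x ∈ Set.Icc (0:ℝ) 1, w x ≠ 0) ∧
    ∀ v v' : ℝ → ℝ, IsC1On01 v v' →
      ∫ x in (0:ℝ)..1, w' x * v' x * (σ x)^2 * μ x
        = 2 * lam * ∫ x in (0:ℝ)..1, w x * v x * μ x

open Set Filter Topology MeasureTheory

lemma aux_ext {f : ℝ → ℝ} {a b : ℝ} (h : a ≤ b) (hf : ContinuousOn f (Icc a b)) :
    ∃ g : ℝ → ℝ, Continuous g ∧ (∀ x, ∃ y ∈ Icc a b, g x = f y) ∧ ∀ x ∈ Icc a b, g x = f x := by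
  refine ⟨fun x => f (projIcc a b h x), ?_, ?_, ?_⟩
  · exact hf.comp_continuous (continuous_subtype_val.comp continuous_projIcc) (fun x => (projIcc a b h x).2)
  · intro x; exact ⟨_, (projIcc a b h x).2, rfl⟩
  · intro x hx; simp only [projIcc_of_mem h hx]

lemma aux_sin (u v : ℝ) : |Real.sin u ^ 2 - Real.sin v ^ 2| ≤ 2 * |u - v| := by
  have h1 : Real.sin u ^ 2 - Real.sin v ^ 2 = (Real.sin u + Real.sin v) * (Real.sin u - Real.sin v) := by ring
  rw [h1, abs_mul]
  have h2 : |Real.sin u + Real.sin v| ≤ 2 := by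
    have := abs_add_le (Real.sin u) (Real.sin v)
    have := Real.abs_sin_le_one u
    have := Real.abs_sin_le_one v
    linarith
  have h3 : |Real.sin u - Real.sin v| ≤ |u - v| := by
    have := Real.lipschitzWith_sin.dist_le_mul u v
    simpa [Real.dist_eq] using this
  gcongr

/-- The phase field. -/
noncomputable def auxH (a s : ℝ → ℝ) (x θ : ℝ) : ℝ := a x * Real.cos θ ^ 2 + s x * Real.sin θ ^ 2

section
variable {a s : ℝ → ℝ} {c B : ℝ} (ha : Continuous a) (hs : Continuous s) (hc : 0 < c)
  (hca : ∀ x, c ≤ a x) (hcs : ∀ x, c ≤ s x) (haB : ∀ x, a x ≤ B) (hsB : ∀ x, s x ≤ B)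

include hca hcs in
lemma auxH_ge (x θ : ℝ) : c ≤ auxH a s x θ := by
  have h := Real.sin_sq_add_cos_sq θ
  unfold auxH
  have h1 := mul_le_mul_of_nonneg_right (hca x) (sq_nonneg (Real.cos θ))
  have h2 := mul_le_mul_of_nonneg_right (hcs x) (sq_nonneg (Real.sin θ))
  have h3 : c = c * Real.cos θ ^ 2 + c * Real.sin θ ^ 2 := by linear_combination -c * h
  linarith

include haB hsB in
lemma auxH_le (x θ : ℝ) : auxH a s x θ ≤ B := by
  have h := Real.sin_sq_add_cos_sq θ
  unfold auxH
  have h1 := mul_le_mul_of_nonneg_right (haB x) (sq_nonneg (Real.cos θ))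
  have h2 := mul_le_mul_of_nonneg_right (hsB x) (sq_nonneg (Real.sin θ))
  have h3 : B = B * Real.cos θ ^ 2 + B * Real.sin θ ^ 2 := by linear_combination -B * h
  linarith

include hc hca hcs haB hsB in
lemma auxH_lip (x u v : ℝ) : |auxH a s x u - auxH a s x v| ≤ 2 * B * |u - v| := by
  have h1 : auxH a s x u - auxH a s x v = (s x - a x) * (Real.sin u ^ 2 - Real.sin v ^ 2) := by
    unfold auxH
    rw [Real.cos_sq', Real.cos_sq']; ring
  rw [h1, abs_mul]
  have h2 : |s x - a x| ≤ B := by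
    rw [abs_le]; constructor <;> linarith [hca x, hcs x, haB x, hsB x]
  calc _ ≤ B * (2 * |u - v|) := by
        gcongr
        · exact (abs_nonneg _).trans h2
        · exact aux_sin u v
    _ = _ := by ring

include hc hca hcs haB hsB in
lemma auxH_lipK (k x : ℝ) : LipschitzWith (Real.toNNReal (|k| * (2 * B))) (fun θ => k * auxH a s x θ) := by
  have hB : 0 ≤ B := by linarith [hca 0, haB 0]
  refine LipschitzWith.of_dist_le_mul fun u v => ?_
  rw [Real.dist_eq, Real.dist_eq, Real.coe_toNNReal _ (by positivity), ← mul_sub, abs_mul, mul_assoc]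
  exact mul_le_mul_of_nonneg_left (auxH_lip hc hca hcs haB hsB x u v) (abs_nonneg _)

include ha hs hc hca hcs haB hsB in
lemma aux_phase (k : ℝ) : ∃ θ : ℝ → ℝ, Continuous θ ∧ θ 0 = 0 ∧
    ∀ x ∈ Icc (0:ℝ) 1, HasDerivAt θ (k * auxH a s x (θ x)) x := by
  have hB : 0 ≤ B := by linarith [hca 0, haB 0]
  let t0 : Icc (-1:ℝ) 2 := ⟨0, by norm_num, by norm_num⟩
  have hP : IsPicardLindelof (fun x θ => k * auxH a s x θ) t0 0
      (Real.toNNReal (|k| * B * 2)) 0 (Real.toNNReal (|k| * B)) (Real.toNNReal (|k| * (2 * B))) := by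
    refine ⟨fun t _ => (auxH_lipK hc hca hcs haB hsB k t).lipschitzOnWith, ?_, ?_, ?_⟩
    · intro x _
      unfold auxH
      fun_prop
    · intro t _ x _
      rw [Real.coe_toNNReal _ (by positivity), Real.norm_eq_abs, abs_mul]
      have h1 := auxH_ge hca hcs t x
      have h2 := auxH_le haB hsB t x
      rw [abs_of_nonneg (hc.le.trans h1)]
      gcongr
    · rw [Real.coe_toNNReal _ (by positivity), Real.coe_toNNReal _ (by positivity)]
      simp only [t0]
      norm_num
  obtain ⟨θ, h0, hθ⟩ := hP.exists_eq_forall_mem_Icc_hasDerivWithinAt₀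
  have hcont : ContinuousOn θ (Icc (-1/2:ℝ) (3/2)) := fun x hx =>
    ((hθ x ⟨by linarith [hx.1], by linarith [hx.2]⟩).continuousWithinAt).mono
      (Icc_subset_Icc (by norm_num) (by norm_num))
  obtain ⟨g, hg, -, hge⟩ := aux_ext (by norm_num) hcont
  refine ⟨g, hg, ?_, ?_⟩
  · rw [hge 0 (by norm_num)]; exact h0
  · intro x hx
    have hx' : x ∈ Icc (-1/2:ℝ) (3/2) := ⟨by linarith [hx.1], by linarith [hx.2]⟩
    rw [hge x hx']
    have h1 := (hθ x ⟨by linarith [hx.1], by linarith [hx.2]⟩).hasDerivAt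
      (Icc_mem_nhds (by linarith [hx.1]) (by linarith [hx.2]))
    refine h1.congr_of_eventuallyEq ?_
    filter_upwards [Icc_mem_nhds (show (-1/2:ℝ) < x by linarith [hx.1]) (show x < (3/2:ℝ) by linarith [hx.2])] with y hy
    exact hge y hy

include ha hs hc hca hcs haB hsB in
/-- existence of the increasing sequence of frequencies -/
lemma aux_seq : ∃ (κ : ℕ → ℝ) (θ : ℕ → ℝ → ℝ), κ 0 = 0 ∧ StrictMono κ ∧ ∀ n, Continuous (θ n) ∧
    θ n 0 = 0 ∧ θ n 1 = n * Real.pi ∧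
    ∀ x ∈ Icc (0:ℝ) 1, HasDerivAt (θ n) (κ n * auxH a s x (θ n x)) x := by
  have hB : 0 ≤ B := by linarith [hca 0, haB 0]
  choose θ hθc hθ0 hθ using aux_phase ha hs hc hca hcs haB hsB
  have hcont : Continuous fun k => θ k 1 := by
    rw [continuous_iff_continuousAt]
    intro k0
    have hb : ∀ k, dist (θ k 1) (θ k0 1) ≤
        gronwallBound 0 (Real.toNNReal (|k0| * (2 * B))) (|k - k0| * B) 1 := by
      intro k
      have := dist_le_of_approx_trajectories_ODE (v := fun x θ => k0 * auxH a s x θ)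
        (f := θ k) (g := θ k0) (a := 0) (b := 1) (εf := |k - k0| * B) (εg := 0) (δ := 0)
        (f' := fun x => k * auxH a s x (θ k x)) (g' := fun x => k0 * auxH a s x (θ k0 x))
        (fun t => auxH_lipK hc hca hcs haB hsB k0 t) (hθc k).continuousOn
        (fun t ht => (hθ k t ⟨ht.1, ht.2.le⟩).hasDerivWithinAt)
        (fun t ht => by
          rw [Real.dist_eq, ← sub_mul, abs_mul]
          have h1 := auxH_ge hca hcs t (θ k t)
          have h2 := auxH_le haB hsB t (θ k t)
          rw [abs_of_nonneg (hc.le.trans h1)]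
          gcongr)
        (hθc k0).continuousOn
        (fun t ht => (hθ k0 t ⟨ht.1, ht.2.le⟩).hasDerivWithinAt)
        (fun t ht => by simp) (by simp [hθ0]) 1 (by norm_num)
      simpa using this
    rw [ContinuousAt, tendsto_iff_dist_tendsto_zero]
    refine squeeze_zero (fun _ => dist_nonneg) hb ?_
    have h2 : Continuous fun k : ℝ => |k - k0| * B := by fun_prop
    have h3 := ((gronwallBound_continuous_ε 0 (Real.toNNReal (|k0| * (2 * B))) 1).comp h2).tendsto k0
    simpa [gronwallBound_ε0_δ0, Function.comp_def] using h3
  have hgrow : ∀ k, 0 ≤ k → k * c ≤ θ k 1 := by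
    intro k hk
    have hmono : MonotoneOn (fun x => θ k x - k * c * x) (Icc (0:ℝ) 1) := by
      refine monotoneOn_of_hasDerivWithinAt_nonneg (f' := fun x => k * auxH a s x (θ k x) - k * c * 1)
        (convex_Icc _ _) ?_ ?_ ?_
      · have := hθc k
        fun_prop
      · intro x hx
        have hx' := interior_subset hx
        exact ((hθ k x hx').sub ((hasDerivAt_id x).const_mul (k * c))).hasDerivWithinAt
      · intro x hx
        have := auxH_ge hca hcs x (θ k x)
        have := mul_le_mul_of_nonneg_left this hk
        linarith
    have := hmono (show (0:ℝ) ∈ Icc (0:ℝ) 1 by norm_num) (show (1:ℝ) ∈ Icc (0:ℝ) 1 by norm_num) (by norm_num)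
    simp only [hθ0] at this
    linarith
  have hstep : ∀ (n : ℕ) (k : ℝ), ∃ k' : ℝ, (0 ≤ k ∧ θ k 1 = n * Real.pi) →
      k < k' ∧ θ k' 1 = (n + 1 : ℕ) * Real.pi := by
    intro n k
    by_cases h : 0 ≤ k ∧ θ k 1 = n * Real.pi
    swap
    · exact ⟨0, fun h' => absurd h' h⟩
    obtain ⟨hk, hkn⟩ := h
    have hpi := Real.pi_pos
    set K := max k ((n + 1 : ℕ) * Real.pi / c) with hK
    have hK1 : (n + 1 : ℕ) * Real.pi ≤ θ K 1 := by
      refine le_trans ?_ (hgrow K (hk.trans (le_max_left _ _)))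
      rw [← div_le_iff₀ hc]; exact le_max_right _ _
    have hiv := intermediate_value_Icc (le_max_left k _ : k ≤ K) hcont.continuousOn
    obtain ⟨k', hk', hk'e⟩ := hiv (show ((n + 1 : ℕ) * Real.pi) ∈ Icc (θ k 1) (θ K 1) from
      ⟨by rw [hkn]; push_cast; linarith, hK1⟩)
    refine ⟨k', fun _ => ⟨lt_of_le_of_ne hk'.1 ?_, hk'e⟩⟩
    rintro rfl
    simp only at hk'e
    rw [hkn] at hk'e; push_cast at hk'e; linarith
  choose g hg using hstep
  let κ : ℕ → ℝ := fun n => Nat.rec (0:ℝ) (fun n k => g n k) n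
  have hκs : ∀ n, κ (n+1) = g n (κ n) := fun n => rfl
  have h00 : θ 0 1 = 0 := by
    have : ∀ x ∈ Icc (0:ℝ) 1, θ 0 x = θ 0 0 := by
      refine constant_of_has_deriv_right_zero (hθc 0).continuousOn ?_
      intro x hx
      have := hθ 0 x ⟨hx.1, hx.2.le⟩
      rw [zero_mul] at this
      exact this.hasDerivWithinAt
    rw [this 1 (by norm_num), hθ0]
  have hκ : ∀ n, 0 ≤ κ n ∧ θ (κ n) 1 = n * Real.pi := by
    intro n
    induction n with
    | zero => exact ⟨le_rfl, by show θ 0 1 = _; simpa using h00⟩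
    | succ n ih =>
      have := hg n (κ n) ih
      exact ⟨ih.1.trans this.1.le, this.2⟩
  refine ⟨κ, fun n => θ (κ n), rfl, strictMono_nat_of_lt_succ fun n => (hg n (κ n) (hκ n)).1, ?_⟩
  intro n
  exact ⟨hθc _, hθ0 _, (hκ n).2, hθ _⟩

include ha hs in
/-- solution from the phase -/
lemma aux_sol {k : ℝ} {θ : ℝ → ℝ} (hθc : Continuous θ)
    (hθ : ∀ x ∈ Icc (0:ℝ) 1, HasDerivAt θ (k * auxH a s x (θ x)) x) :
    ∃ r : ℝ → ℝ, Continuous r ∧ (∀ x, 0 < r x) ∧ r 0 = 1 ∧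
      (∀ x ∈ Icc (0:ℝ) 1, HasDerivAt (fun x => r x * Real.cos (θ x)) (s x * (-k * r x * Real.sin (θ x))) x) ∧
      (∀ x ∈ Icc (0:ℝ) 1, HasDerivAt (fun x => -k * r x * Real.sin (θ x))
        (-(k ^ 2 * a x * (r x * Real.cos (θ x)))) x) := by
  let f : ℝ → ℝ := fun x => k * (a x - s x) * Real.sin (θ x) * Real.cos (θ x)
  have hf : Continuous f := by fun_prop
  let I : ℝ → ℝ := fun x => ∫ t in (0:ℝ)..x, f t
  have hI : ∀ x, HasDerivAt I (f x) x := fun x => hf.integral_hasStrictDerivAt 0 x |>.hasDerivAt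
  have hr : ∀ x, HasDerivAt (fun x => Real.exp (I x)) (Real.exp (I x) * f x) x := fun x => (hI x).exp
  refine ⟨fun x => Real.exp (I x), continuous_iff_continuousAt.2 fun x => (hr x).continuousAt,
    fun x => Real.exp_pos _, by simp [I], ?_, ?_⟩
  · intro x hx
    have h := (hr x).mul ((hθ x hx).cos)
    convert! h using 1
    have h1 := Real.cos_sq' (θ x)
    simp only [f, auxH]
    linear_combination (Real.exp (I x) * k * s x * Real.sin (θ x)) * h1
  · intro x hx
    have h := ((hr x).const_mul (-k)).mul ((hθ x hx).sin)
    convert! h using 1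
    have h1 := Real.cos_sq' (θ x)
    simp only [f, auxH]
    linear_combination (Real.exp (I x) * k ^ 2 * a x * Real.cos (θ x)) * h1
end

lemma aux_mem {x : ℝ} (hx : x ∈ uIcc (0:ℝ) 1) : x ∈ Icc (0:ℝ) 1 := by
  rwa [uIcc_of_le zero_le_one] at hx

lemma aux_C1cont {u u' : ℝ → ℝ} (h : IsC1On01 u u') : ContinuousOn u (Icc (0:ℝ) 1) :=
  fun x hx => (h.1 x hx).continuousAt.continuousWithinAt

lemma aux_weak {σ μ a s w q : ℝ → ℝ} {lam : ℝ} (ha : Continuous a) (hs : Continuous s)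
    (haμ : ∀ x ∈ Icc (0:ℝ) 1, a x = 2 * μ x)
    (hsσ : ∀ x ∈ Icc (0:ℝ) 1, s x * (σ x ^ 2 * μ x) = 1)
    (hw : ∀ x ∈ Icc (0:ℝ) 1, HasDerivAt w (s x * q x) x)
    (hq : ∀ x ∈ Icc (0:ℝ) 1, HasDerivAt q (-(lam * a x * w x)) x)
    (hq0 : q 0 = 0) (hq1 : q 1 = 0) (hne : ∃ x ∈ Icc (0:ℝ) 1, w x ≠ 0) :
    WeakEigenpair σ μ lam w (fun x => s x * q x) := by
  have hwc : ContinuousOn w (Icc (0:ℝ) 1) := fun x hx => (hw x hx).continuousAt.continuousWithinAt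
  have hqc : ContinuousOn q (Icc (0:ℝ) 1) := fun x hx => (hq x hx).continuousAt.continuousWithinAt
  refine ⟨⟨hw, hs.continuousOn.mul hqc⟩, hne, ?_⟩
  intro v v' hv
  have hparts := intervalIntegral.integral_mul_deriv_eq_deriv_mul (a := 0) (b := 1) (u := q) (v := v)
    (u' := fun x => -(lam * a x * w x)) (v' := v')
    (fun x hx => hq x (aux_mem hx)) (fun x hx => hv.1 x (aux_mem hx))
    (ContinuousOn.intervalIntegrable_of_Icc zero_le_one
      ((continuousOn_const.mul ha.continuousOn).mul hwc).neg)
    (ContinuousOn.intervalIntegrable_of_Icc zero_le_one hv.2)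
  rw [hq0, hq1] at hparts
  have h1 : ∫ x in (0:ℝ)..1, (fun x => s x * q x) x * v' x * (σ x)^2 * μ x = ∫ x in (0:ℝ)..1, q x * v' x := by
    refine intervalIntegral.integral_congr fun x hx => ?_
    have := hsσ x (aux_mem hx)
    simp only
    linear_combination (q x * v' x) * this
  rw [h1, hparts, ← intervalIntegral.integral_const_mul]
  simp only [zero_mul, sub_zero, zero_sub, ← intervalIntegral.integral_neg]
  refine intervalIntegral.integral_congr fun x hx => ?_
  have := haμ x (aux_mem hx)
  simp only [this]
  ring

lemma aux_conv {σ μ a s u u' : ℝ → ℝ} {lam : ℝ} (ha : Continuous a)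
    (hσ : ContinuousOn σ (Icc (0:ℝ) 1)) (hμ : ContinuousOn μ (Icc (0:ℝ) 1))
    (haμ : ∀ x ∈ Icc (0:ℝ) 1, a x = 2 * μ x)
    (hsσ : ∀ x ∈ Icc (0:ℝ) 1, s x * (σ x ^ 2 * μ x) = 1)
    (h : WeakEigenpair σ μ lam u u') :
    ∃ Q : ℝ → ℝ, Q 0 = 0 ∧ (∀ x ∈ Icc (0:ℝ) 1, HasDerivAt Q (-(lam * a x * u x)) x) ∧
      ∀ x ∈ Icc (0:ℝ) 1, u' x = s x * Q x := by
  obtain ⟨hC, -, hweak⟩ := h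
  obtain ⟨ue, huec, -, hue⟩ := aux_ext zero_le_one (aux_C1cont hC)
  obtain ⟨P, hPc, -, hP⟩ := aux_ext (f := fun x => u' x * (σ x ^ 2 * μ x)) zero_le_one
    (hC.2.mul ((hσ.pow 2).mul hμ))
  let f : ℝ → ℝ := fun x => lam * a x * ue x
  have hf : Continuous f := by fun_prop
  let F : ℝ → ℝ := fun x => ∫ t in (0:ℝ)..x, f t
  have hF : ∀ x, HasDerivAt F (f x) x := fun x => hf.integral_hasStrictDerivAt 0 x |>.hasDerivAt
  have hFc : Continuous F := continuous_iff_continuousAt.2 fun x => (hF x).continuousAt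
  let g : ℝ → ℝ := fun x => P x + F x
  have hg : Continuous g := by fun_prop
  let V : ℝ → ℝ := fun x => ∫ t in (0:ℝ)..x, g t
  have hV : ∀ x, HasDerivAt V (g x) x := fun x => hg.integral_hasStrictDerivAt 0 x |>.hasDerivAt
  have hF0 : F 0 = 0 := by simp [F]
  have hF1 : F 1 = 0 := by
    have := hweak (fun _ => 1) (fun _ => 0) ⟨fun x _ => hasDerivAt_const x 1, continuousOn_const⟩
    simp only [mul_zero, zero_mul, intervalIntegral.integral_zero] at this
    rw [← intervalIntegral.integral_const_mul] at this
    rw [this]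
    refine intervalIntegral.integral_congr fun x hx => ?_
    simp only [f, hue x (aux_mem hx), haμ x (aux_mem hx)]
    ring
  have hw := hweak V g ⟨fun x _ => hV x, hg.continuousOn⟩
  have hparts := intervalIntegral.integral_mul_deriv_eq_deriv_mul (a := 0) (b := 1) (u := V) (v := F)
    (u' := g) (v' := f) (fun x _ => hV x) (fun x _ => hF x)
    (hg.intervalIntegrable _ _) (hf.intervalIntegrable _ _)
  rw [hF0, hF1] at hparts
  have e1 : ∫ x in (0:ℝ)..1, u' x * g x * (σ x)^2 * μ x = ∫ x in (0:ℝ)..1, P x * g x := by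
    refine intervalIntegral.integral_congr fun x hx => ?_
    simp only [hP x (aux_mem hx)]; ring
  have e2 : 2 * lam * ∫ x in (0:ℝ)..1, u x * V x * μ x = ∫ x in (0:ℝ)..1, V x * f x := by
    rw [← intervalIntegral.integral_const_mul]
    refine intervalIntegral.integral_congr fun x hx => ?_
    simp only [f, hue x (aux_mem hx), haμ x (aux_mem hx)]
    ring
  have e3 : ∫ x in (0:ℝ)..1, g x * g x = (∫ x in (0:ℝ)..1, P x * g x) + ∫ x in (0:ℝ)..1, g x * F x := by
    rw [← intervalIntegral.integral_add (f := fun x => P x * g x) (g := fun x => g x * F x)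
      ((hPc.mul hg).intervalIntegrable _ _) ((hg.mul hFc).intervalIntegrable _ _)]
    refine intervalIntegral.integral_congr fun x hx => ?_
    simp only [g]; ring
  have e4 : ∫ x in (0:ℝ)..1, g x * g x = 0 := by
    rw [e3, ← e1, hw, e2, hparts]; ring
  have hg0 : ∀ x ∈ Icc (0:ℝ) 1, g x = 0 := by
    by_contra hcon
    push Not at hcon
    obtain ⟨x, hx, hgx⟩ := hcon
    have := intervalIntegral.integral_lt_integral_of_continuousOn_of_le_of_exists_lt
      (f := fun _ => (0:ℝ)) (g := fun x => g x * g x) zero_lt_one continuousOn_const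
      (hg.mul hg).continuousOn (fun x _ => mul_self_nonneg _) ⟨x, hx, mul_self_pos.2 hgx⟩
    simp only [intervalIntegral.integral_zero, e4, lt_irrefl] at this
  refine ⟨fun x => - F x, by simp [hF0], ?_, ?_⟩
  · intro x hx
    have := (hF x).neg
    simp only [f, hue x hx] at this
    exact this
  · intro x hx
    have h1 := hg0 x hx
    simp only [g, hP x hx] at h1
    have h2 := hsσ x hx
    linear_combination (s x) * h1 - u' x * h2

lemma aux_unique {a s u q : ℝ → ℝ} {lam B : ℝ} (haB : ∀ x ∈ Icc (0:ℝ) 1, |a x| ≤ B)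
    (hsB : ∀ x ∈ Icc (0:ℝ) 1, |s x| ≤ B)
    (hu : ∀ x ∈ Icc (0:ℝ) 1, HasDerivAt u (s x * q x) x)
    (hq : ∀ x ∈ Icc (0:ℝ) 1, HasDerivAt q (-(lam * a x * u x)) x)
    (hu0 : u 0 = 0) (hq0 : q 0 = 0) : ∀ x ∈ Icc (0:ℝ) 1, u x = 0 := by
  have hE : ∀ x ∈ Icc (0:ℝ) 1, HasDerivAt (fun x => u x ^ 2 + q x ^ 2)
      (2 * (s x - lam * a x) * (u x * q x)) x := by
    intro x hx
    have h := ((hu x hx).pow 2).add ((hq x hx).pow 2)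
    convert! h using 1
    simp; ring
  have hz := eq_zero_of_abs_deriv_le_mul_abs_self_of_eq_zero_right (a := 0) (b := 1)
    (K := B + |lam| * B)
    (fun x hx => (hE x hx).continuousAt.continuousWithinAt)
    (fun x hx => (hE x ⟨hx.1, hx.2.le⟩).hasDerivWithinAt) (by simp [hu0, hq0]) (by
      intro x hx
      have hx' : x ∈ Icc (0:ℝ) 1 := ⟨hx.1, hx.2.le⟩
      have h1 : |s x - lam * a x| ≤ B + |lam| * B := by
        refine (abs_sub _ _).trans ?_
        rw [abs_mul]
        gcongr
        · exact hsB x hx'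
        · exact haB x hx'
      have h2 : 2 * |u x * q x| ≤ u x ^ 2 + q x ^ 2 := by
        rw [abs_mul, ← sq_abs (u x), ← sq_abs (q x)]
        nlinarith [sq_nonneg (|u x| - |q x|)]
      rw [Real.norm_eq_abs, Real.norm_eq_abs, abs_of_nonneg (by positivity : 0 ≤ u x ^ 2 + q x ^ 2)]
      rw [abs_mul, abs_mul, abs_two]
      calc _ = |s x - lam * a x| * (2 * |u x * q x|) := by ring
        _ ≤ _ := mul_le_mul h1 h2 (by positivity) ((abs_nonneg _).trans h1))
  intro x hx
  have := hz x hx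
  nlinarith [sq_nonneg (u x), sq_nonneg (q x)]

/-- Hölder on the unit interval, and bounded. -/
def auxHol (β : ℝ) (f : ℝ → ℝ) : Prop :=
  (∃ C : ℝ, 0 ≤ C ∧ ∀ x ∈ Icc (0:ℝ) 1, ∀ y ∈ Icc (0:ℝ) 1, |f x - f y| ≤ C * |x - y| ^ β) ∧
  ∃ M : ℝ, 0 ≤ M ∧ ∀ x ∈ Icc (0:ℝ) 1, |f x| ≤ M

lemma auxHol_of {β γ : ℝ} {f : ℝ → ℝ} (hβ : β ≤ γ) (hβ0 : 0 < β)
    (hc : ContinuousOn f (Icc (0:ℝ) 1))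
    (h : ∃ C : ℝ, ∀ x ∈ Icc (0:ℝ) 1, ∀ y ∈ Icc (0:ℝ) 1, |f x - f y| ≤ C * |x - y| ^ γ) :
    auxHol β f := by
  obtain ⟨C, hC⟩ := h
  constructor
  · refine ⟨|C|, abs_nonneg _, fun x hx y hy => ?_⟩
    have hxy : |x - y| ≤ 1 := by
      rw [abs_le]; constructor <;> linarith [hx.1, hx.2, hy.1, hy.2]
    refine (hC x hx y hy).trans ?_
    refine mul_le_mul (le_abs_self C) ?_ (by positivity) (abs_nonneg _)
    rcases (abs_nonneg (x - y)).eq_or_lt with h0 | h0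
    · rw [← h0, Real.zero_rpow hβ0.ne', Real.zero_rpow (hβ0.trans_le hβ).ne']
    · exact Real.rpow_le_rpow_of_exponent_ge h0 hxy hβ
  · obtain ⟨M, hM⟩ := isCompact_Icc.exists_bound_of_continuousOn hc
    exact ⟨|M|, abs_nonneg _, fun x hx => (hM x hx).trans (le_abs_self M)⟩

lemma auxHol_mul {β : ℝ} {f g : ℝ → ℝ} (hf : auxHol β f) (hg : auxHol β g) :
    auxHol β (fun x => f x * g x) := by
  obtain ⟨⟨C, hC0, hC⟩, M, hM0, hM⟩ := hf
  obtain ⟨⟨D, hD0, hD⟩, N, hN0, hN⟩ := hg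
  refine ⟨⟨M * D + C * N, by positivity, fun x hx y hy => ?_⟩, M * N, by positivity, fun x hx => ?_⟩
  · have : f x * g x - f y * g y = f x * (g x - g y) + (f x - f y) * g y := by ring
    rw [this]
    refine (abs_add_le _ _).trans ?_
    rw [abs_mul, abs_mul]
    have h1 := mul_le_mul (hM x hx) (hD x hx y hy) (abs_nonneg _) hM0
    have h2 := mul_le_mul (hC x hx y hy) (hN y hy) (abs_nonneg _) (by positivity)
    linarith
  · rw [abs_mul]
    exact mul_le_mul (hM x hx) (hN x hx) (abs_nonneg _) hM0

lemma auxHol_inv {β c : ℝ} {f g : ℝ → ℝ} (hc : 0 < c) (hf : auxHol β f)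
    (hfc : ∀ x ∈ Icc (0:ℝ) 1, c ≤ f x) (hgf : ∀ x ∈ Icc (0:ℝ) 1, g x * f x = 1) :
    auxHol β g := by
  obtain ⟨⟨C, hC0, hC⟩, M, hM0, hM⟩ := hf
  have hb : ∀ x ∈ Icc (0:ℝ) 1, |g x| ≤ 1 / c := by
    intro x hx
    have h1 : |g x| * f x = 1 := by
      rw [← abs_of_pos (hc.trans_le (hfc x hx)), ← abs_mul, hgf x hx, abs_one]
    rw [le_div_iff₀ hc, ← h1]
    exact mul_le_mul_of_nonneg_left (hfc x hx) (abs_nonneg _)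
  refine ⟨⟨1 / c * (1 / c) * C, by positivity, fun x hx y hy => ?_⟩, 1 / c, by positivity, hb⟩
  have : g x - g y = g x * g y * (f y - f x) := by
    linear_combination g y * hgf x hx - g x * hgf y hy
  rw [this, abs_mul, abs_mul, mul_assoc (1 / c * (1 / c)), abs_sub_comm]
  refine mul_le_mul (mul_le_mul (hb x hx) (hb y hy) (abs_nonneg _) (by positivity)) (hC x hx y hy)
    (abs_nonneg _) (by positivity)

/-- Spectral decomposition for the weak Neumann eigenvalue problem associated with a
`1/2`-Hölder volatility `σ` and an `α`-Hölder density `μ`, both bounded below by `d > 0`. -/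
theorem statement0
    (α d : ℝ) (hα : 0 < α) (hα1 : α ≤ 1) (hd : 0 < d)
    (σ μ : ℝ → ℝ)
    (hσc : ContinuousOn σ (Set.Icc (0:ℝ) 1)) (hμc : ContinuousOn μ (Set.Icc (0:ℝ) 1))
    (hσd : ∀ x ∈ Set.Icc (0:ℝ) 1, d ≤ σ x) (hμd : ∀ x ∈ Set.Icc (0:ℝ) 1, d ≤ μ x)
    (hμ1 : (∫ x in (0:ℝ)..1, μ x) = 1)
    (hσH : ∃ C : ℝ, ∀ x ∈ Set.Icc (0:ℝ) 1, ∀ y ∈ Set.Icc (0:ℝ) 1,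
      |σ x - σ y| ≤ C * |x - y| ^ ((1:ℝ)/2))
    (hμH : ∃ C : ℝ, ∀ x ∈ Set.Icc (0:ℝ) 1, ∀ y ∈ Set.Icc (0:ℝ) 1,
      |μ x - μ y| ≤ C * |x - y| ^ α) :
    ∃ (lam : ℕ → ℝ) (w w' : ℕ → ℝ → ℝ),
      -- λ₀ = 0 and w₀ ≡ 1
      lam 0 = 0 ∧ (∀ x ∈ Set.Icc (0:ℝ) 1, w 0 x = 1) ∧
      -- 0 < λ₁ < λ₂ ≤ λ₃ ≤ ...
      0 < lam 1 ∧ lam 1 < lam 2 ∧ (∀ i : ℕ, 2 ≤ i → lam i ≤ lam (i+1)) ∧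
      -- each (λᵢ, wᵢ) solves the weak Neumann eigenvalue problem
      (∀ i : ℕ, WeakEigenpair σ μ (lam i) (w i) (w' i)) ∧
      -- μ-orthogonality
      (∀ i k : ℕ, i ≠ k → (∫ x in (0:ℝ)..1, w i x * w k x * μ x) = 0) ∧
      -- Neumann boundary conditions
      (∀ i : ℕ, w' i 0 = 0 ∧ w' i 1 = 0) ∧
      -- (after possibly replacing w₁ by -w₁) w₁' > 0 on (0,1), so w₁ is strictly monotone
      (∀ x ∈ Set.Ioo (0:ℝ) 1, 0 < w' 1 x) ∧ StrictMonoOn (w 1) (Set.Icc (0:ℝ) 1) ∧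
      -- w₁' is Hölder continuous of order min(1/2, α)
      (∃ C : ℝ, ∀ x ∈ Set.Icc (0:ℝ) 1, ∀ y ∈ Set.Icc (0:ℝ) 1,
        |w' 1 x - w' 1 y| ≤ C * |x - y| ^ (min ((1:ℝ)/2) α)) ∧
      -- λ₁ is simple
      (∀ (u u' : ℝ → ℝ), WeakEigenpair σ μ (lam 1) u u' →
        ∃ cc : ℝ, ∀ x ∈ Set.Icc (0:ℝ) 1, u x = cc * w 1 x) := by
  classical
  obtain ⟨μe, hμec, hμer, hμee⟩ := aux_ext zero_le_one hμc
  have hpos : ∀ x ∈ Icc (0:ℝ) 1, d ^ 2 * d ≤ σ x ^ 2 * μ x := by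
    intro x hx
    have h1 := hσd x hx
    have h2 := hμd x hx
    gcongr
  have hd3 : 0 < d ^ 2 * d := by positivity
  have hpc : ContinuousOn (fun x => σ x ^ 2 * μ x) (Icc (0:ℝ) 1) := (hσc.pow 2).mul hμc
  obtain ⟨s, hsc, hsr, hse⟩ := aux_ext (f := fun x => (σ x ^ 2 * μ x)⁻¹) zero_le_one
    (hpc.inv₀ fun x hx => (hd3.trans_le (hpos x hx)).ne')
  let a : ℝ → ℝ := fun x => 2 * μe x
  have hac : Continuous a := by fun_prop
  obtain ⟨Mμ, hMμ⟩ := isCompact_Icc.exists_bound_of_continuousOn hμc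
  obtain ⟨Mp, hMp⟩ := isCompact_Icc.exists_bound_of_continuousOn hpc
  have hMp0 : 0 < Mp := by
    have h0 : (0:ℝ) ∈ Icc (0:ℝ) 1 := by norm_num
    have := (le_abs_self _).trans (hMp 0 h0)
    linarith [hpos 0 h0]
  let c := min (2 * d) Mp⁻¹
  let B := max (2 * Mμ) (d ^ 2 * d)⁻¹
  have hc : 0 < c := lt_min (by linarith) (by positivity)
  have hca : ∀ x, c ≤ a x := by
    intro x
    obtain ⟨y, hy, hxy⟩ := hμer x
    have := hμd y hy
    refine (min_le_left _ _).trans ?_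
    simp only [a, hxy]; linarith
  have hcs : ∀ x, c ≤ s x := by
    intro x
    obtain ⟨y, hy, hxy⟩ := hsr x
    refine (min_le_right _ _).trans ?_
    rw [hxy]
    exact inv_anti₀ (hd3.trans_le (hpos y hy)) ((le_abs_self _).trans (hMp y hy))
  have haB : ∀ x, a x ≤ B := by
    intro x
    obtain ⟨y, hy, hxy⟩ := hμer x
    have := (le_abs_self _).trans (hMμ y hy)
    refine le_trans ?_ (le_max_left _ _)
    simp only [a, hxy]; linarith
  have hsB : ∀ x, s x ≤ B := by
    intro x
    obtain ⟨y, hy, hxy⟩ := hsr x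
    refine le_trans ?_ (le_max_right _ _)
    rw [hxy]
    exact inv_anti₀ hd3 (hpos y hy)
  have haμ : ∀ x ∈ Icc (0:ℝ) 1, a x = 2 * μ x := by
    intro x hx; simp only [a, hμee x hx]
  have hsσ : ∀ x ∈ Icc (0:ℝ) 1, s x * (σ x ^ 2 * μ x) = 1 := by
    intro x hx
    rw [hse x hx]
    exact inv_mul_cancel₀ (hd3.trans_le (hpos x hx)).ne'
  obtain ⟨κ, θ, hκ0, hκm, hθall⟩ := aux_seq hac hsc hc hca hcs haB hsB
  choose hθc hθ0 hθ1 hθ using hθall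
  choose r hrc hrp hr0 hw hq using fun n => aux_sol hac hsc (hθc n) (hθ n)
  let e : ℕ → ℝ := fun n => if n = 1 then -1 else 1
  have he : ∀ n, e n ≠ 0 := by intro n; simp only [e]; split_ifs <;> norm_num
  let W : ℕ → ℝ → ℝ := fun n x => e n * (r n x * Real.cos (θ n x))
  let Q : ℕ → ℝ → ℝ := fun n x => e n * (-κ n * r n x * Real.sin (θ n x))
  have hW : ∀ n, ∀ x ∈ Icc (0:ℝ) 1, HasDerivAt (W n) (s x * Q n x) x := by
    intro n x hx
    have := (hw n x hx).const_mul (e n)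
    convert! this using 1
    simp only [Q]; ring
  have hQ : ∀ n, ∀ x ∈ Icc (0:ℝ) 1, HasDerivAt (Q n) (-(κ n ^ 2 * a x * W n x)) x := by
    intro n x hx
    have := (hq n x hx).const_mul (e n)
    convert! this using 1
    simp only [W]; ring
  have hQ0 : ∀ n, Q n 0 = 0 := by intro n; simp [Q, hθ0]
  have hQ1 : ∀ n, Q n 1 = 0 := by intro n; simp [Q, hθ1]
  have hW0 : ∀ n, W n 0 = e n := by intro n; simp [W, hθ0, hr0]
  have hWE : ∀ n, WeakEigenpair σ μ (κ n ^ 2) (W n) (fun x => s x * Q n x) := fun n =>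
    aux_weak hac hsc haμ hsσ (hW n) (hQ n) (hQ0 n) (hQ1 n)
      ⟨0, by norm_num, by rw [hW0]; exact he n⟩
  have hκnn : ∀ n, 0 ≤ κ n := fun n => hκ0 ▸ hκm.monotone (Nat.zero_le n)
  have hlam : StrictMono fun n => κ n ^ 2 := fun i j hij =>
    pow_lt_pow_left₀ (hκm hij) (hκnn i) two_ne_zero
  have hκ1 : 0 < κ 1 := hκ0 ▸ hκm zero_lt_one
  have hW1pos : ∀ x ∈ Ioo (0:ℝ) 1, 0 < s x * Q 1 x := by
    have hmono : StrictMonoOn (θ 1) (Icc (0:ℝ) 1) := by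
      refine strictMonoOn_of_hasDerivWithinAt_pos (convex_Icc _ _) (hθc 1).continuousOn
        (fun x hx => (hθ 1 x (interior_subset hx)).hasDerivWithinAt) ?_
      intro x hx
      exact mul_pos hκ1 (hc.trans_le (auxH_ge hca hcs x _))
    intro x hx
    have h1 := hmono (by norm_num : (0:ℝ) ∈ Icc (0:ℝ) 1) ⟨hx.1.le, hx.2.le⟩ hx.1
    have h2 := hmono ⟨hx.1.le, hx.2.le⟩ (by norm_num : (1:ℝ) ∈ Icc (0:ℝ) 1) hx.2
    rw [hθ0] at h1
    rw [hθ1] at h2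
    have h3 : 0 < Real.sin (θ 1 x) := Real.sin_pos_of_pos_of_lt_pi h1 (by simpa using h2)
    have h4 : Q 1 x = κ 1 * r 1 x * Real.sin (θ 1 x) := by simp [Q, e]
    rw [h4]
    exact mul_pos (hc.trans_le (hcs x)) (mul_pos (mul_pos hκ1 (hrp 1 x)) h3)
  refine ⟨fun n => κ n ^ 2, W, fun n x => s x * Q n x, by simp [hκ0], ?_, by positivity,
    hlam (by norm_num), fun i _ => (hlam (Nat.lt_succ_self i)).le, hWE, ?_, ?_, hW1pos, ?_, ?_, ?_⟩
  · intro x hx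
    have := constant_of_has_deriv_right_zero (f := W 0) (a := 0) (b := 1)
      (aux_C1cont (hWE 0).1) (fun x hx => by
        have := hW 0 x ⟨hx.1, hx.2.le⟩
        simp only [Q, hκ0, neg_zero, zero_mul, mul_zero] at this
        exact this.hasDerivWithinAt) x hx
    rw [this, hW0]; simp [e]
  · intro i k hik
    have h1 := (hWE i).2.2 (W k) _ (hWE k).1
    have h2 := (hWE k).2.2 (W i) _ (hWE i).1
    have e1 : ∫ x in (0:ℝ)..1, (s x * Q i x) * (s x * Q k x) * (σ x)^2 * μ x =
        ∫ x in (0:ℝ)..1, (s x * Q k x) * (s x * Q i x) * (σ x)^2 * μ x := by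
      congr 1; ext x; ring
    have e2 : ∫ x in (0:ℝ)..1, W k x * W i x * μ x = ∫ x in (0:ℝ)..1, W i x * W k x * μ x := by
      congr 1; ext x; ring
    rw [e2] at h2
    simp only at h1 h2
    rw [e1, h2] at h1
    have hne : κ k ^ 2 - κ i ^ 2 ≠ 0 := sub_ne_zero.2 fun h => hik (hlam.injective h).symm
    have h3 : (κ k ^ 2 - κ i ^ 2) * (∫ x in (0:ℝ)..1, W i x * W k x * μ x) = 0 := by
      linear_combination h1 / 2
    exact (mul_eq_zero.1 h3).resolve_left hne
  · intro i
    simp [hQ0, hQ1]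
  · refine strictMonoOn_of_hasDerivWithinAt_pos (convex_Icc _ _) (aux_C1cont (hWE 1).1)
      (fun x hx => (hW 1 x (interior_subset hx)).hasDerivWithinAt) ?_
    intro x hx
    rw [interior_Icc] at hx
    exact hW1pos x hx
  · set β := min ((1:ℝ)/2) α with hβ
    have hβ0 : 0 < β := lt_min (by norm_num) hα
    have hβ1 : β ≤ 1 := (min_le_right _ _).trans hα1
    have Hσ : auxHol β σ := auxHol_of (min_le_left _ _) hβ0 hσc hσH
    have Hμ : auxHol β μ := auxHol_of (min_le_right _ _) hβ0 hμc hμH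
    have Hs : auxHol β s := by
      refine auxHol_inv hd3 (auxHol_mul (auxHol_mul Hσ Hσ) Hμ) ?_ ?_
      · intro x hx; have := hpos x hx; rw [pow_two (σ x)] at this; exact this
      · intro x hx; have := hsσ x hx; rw [pow_two (σ x)] at this; exact this
    have hQc : ContinuousOn (Q 1) (Icc (0:ℝ) 1) :=
      fun x hx => (hQ 1 x hx).continuousAt.continuousWithinAt
    have HQ : auxHol β (Q 1) := by
      refine auxHol_of hβ1 hβ0 hQc ?_
      obtain ⟨C, hC⟩ := isCompact_Icc.exists_bound_of_continuousOn
        (f := fun x => -(κ 1 ^ 2 * a x * W 1 x)) (s := Icc (0:ℝ) 1)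
        ((continuousOn_const.mul hac.continuousOn).mul (aux_C1cont (hWE 1).1)).neg
      refine ⟨C, fun x hx y hy => ?_⟩
      have := Convex.norm_image_sub_le_of_norm_hasDerivWithin_le
        (fun x hx => (hQ 1 x hx).hasDerivWithinAt) hC (convex_Icc (0:ℝ) 1) hy hx
      simpa [Real.norm_eq_abs] using this
    obtain ⟨⟨C, _, hC⟩, _⟩ := auxHol_mul Hs HQ
    exact ⟨C, hC⟩
  · intro u u' hu
    obtain ⟨P, hP0, hP, hPu⟩ := aux_conv hac hσc hμc haμ hsσ hu
    refine ⟨-u 0, ?_⟩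
    have habs : ∀ f : ℝ → ℝ, (∀ x, c ≤ f x) → (∀ x, f x ≤ B) → ∀ x ∈ Icc (0:ℝ) 1, |f x| ≤ B := by
      intro f h1 h2 x _
      rw [abs_of_nonneg (hc.le.trans (h1 x))]; exact h2 x
    have := aux_unique (a := a) (s := s) (u := fun x => u x - (-u 0) * W 1 x)
      (q := fun x => P x - (-u 0) * Q 1 x) (lam := κ 1 ^ 2)
      (habs a hca haB) (habs s hcs hsB)
      (by
        intro x hx
        have := (hu.1.1 x hx).sub ((hW 1 x hx).const_mul (-u 0))
        rw [hPu x hx] at this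
        convert! this using 1
        ring)
      (by
        intro x hx
        have := (hP x hx).sub ((hQ 1 x hx).const_mul (-u 0))
        convert! this using 1
        ring)
      (by simp [hW0, e]) (by simp [hP0, hQ0])
    intro x hx
    have := this x hx
    linarith
end

section
/- There exist constants ε > 0 and C > 0, depending only on d, D and α, such that for every pair (σ, μ) ∈ Θ_α one has ε ≤ λ₁(σ,μ) ≤ C, λ₂(σ,μ) ≤ C, and λ₂(σ,μ) − λ₁(σ,μ) ≥ ε. -/
/-- Membership in `V₀`: continuously differentiable on `[0,1]` with `μ`-mean zero. -/
def MemV0 (μ u u' : ℝ → ℝ) : Prop :=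
  IsC1On01 u u' ∧ (∫ x in (0:ℝ)..1, u x * μ x) = 0

/-- `u` is not identically zero on `[0,1]`. -/
def NotZeroOn01 (u : ℝ → ℝ) : Prop := ∃ x ∈ Set.Icc (0:ℝ) 1, u x ≠ 0

/-- The Rayleigh quotient `R(u) = (∫₀¹ u'² σ² μ)/(∫₀¹ u² μ)`. -/
noncomputable def Rayleigh (σ μ u u' : ℝ → ℝ) : ℝ :=
  (∫ x in (0:ℝ)..1, (u' x)^2 * (σ x)^2 * μ x) / (∫ x in (0:ℝ)..1, (u x)^2 * μ x)

/-- The first variational eigenvalue: `2λ₁ = inf{R(u) : u ∈ V₀, u ≠ 0}`. -/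
noncomputable def lam1 (σ μ : ℝ → ℝ) : ℝ :=
  (1/2) * sInf { r : ℝ | ∃ u u' : ℝ → ℝ,
    MemV0 μ u u' ∧ NotZeroOn01 u ∧ r = Rayleigh σ μ u u' }

/-- The second variational eigenvalue:
`2λ₂ = inf { sup {R(u) : u ∈ S, u ≠ 0} : S a two-dimensional subspace of V₀ }`. -/
noncomputable def lam2 (σ μ : ℝ → ℝ) : ℝ :=
  (1/2) * sInf { r : ℝ |
    ∃ u₁ u₁' u₂ u₂' : ℝ → ℝ, MemV0 μ u₁ u₁' ∧ MemV0 μ u₂ u₂' ∧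
      (∀ a b : ℝ, (∀ x ∈ Set.Icc (0:ℝ) 1, a * u₁ x + b * u₂ x = 0) → a = 0 ∧ b = 0) ∧
      r = sSup { s : ℝ | ∃ a b : ℝ,
        NotZeroOn01 (fun x => a * u₁ x + b * u₂ x) ∧
        s = Rayleigh σ μ (fun x => a * u₁ x + b * u₂ x)
              (fun x => a * u₁' x + b * u₂' x) } }

open Set MeasureTheory Filter Topology

lemma picone {a b κ : ℝ} (hab : a ≤ b) {m q u P Θ Θ' : ℝ → ℝ}
    (hm : Continuous m) (hq : Continuous q) (hmpos : ∀ x, 0 < m x)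
    (hu : ContinuousOn u (Icc a b))
    (hP : ∀ x ∈ Icc a b, HasDerivAt P (u x * m x) x)
    (hPa : P a = 0) (hPb : P b = 0) (hκ : 0 ≤ κ)
    (hΘ : ∀ x ∈ Icc a b, HasDerivAt Θ (Θ' x) x) (hΘ' : ContinuousOn Θ' (Icc a b))
    (hpos : ∀ x ∈ Icc a b, 0 < Θ x) (hlt : ∀ x ∈ Icc a b, Θ x < Real.pi)
    (hineq : ∀ x ∈ Icc a b,
      κ * (m x * Real.cos (Θ x) ^ 2 + q x * Real.sin (Θ x) ^ 2) ≤ Θ' x) :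
    κ ^ 2 * ∫ x in a..b, q x * P x ^ 2 ≤ ∫ x in a..b, u x ^ 2 * m x := by
  have hs : ∀ x ∈ Icc a b, 0 < Real.sin (Θ x) := fun x hx =>
    Real.sin_pos_of_pos_of_lt_pi (hpos x hx) (hlt x hx)
  have hPc : ContinuousOn P (Icc a b) := fun x hx => (hP x hx).continuousAt.continuousWithinAt
  have hΘc : ContinuousOn Θ (Icc a b) := fun x hx => (hΘ x hx).continuousAt.continuousWithinAt
  have hsc : ContinuousOn (fun x => Real.sin (Θ x)) (Icc a b) := Real.continuous_sin.comp_continuousOn hΘc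
  have hcc : ContinuousOn (fun x => Real.cos (Θ x)) (Icc a b) := Real.continuous_cos.comp_continuousOn hΘc
  have hmc := hm.continuousOn (s := Icc a b)
  have hqc := hq.continuousOn (s := Icc a b)
  set G : ℝ → ℝ := fun x => κ * (Real.cos (Θ x) / Real.sin (Θ x)) * P x ^ 2 with hG
  set G' : ℝ → ℝ := fun x => κ * (-(Θ' x) / Real.sin (Θ x) ^ 2) * P x ^ 2
      + κ * (Real.cos (Θ x) / Real.sin (Θ x)) * (2 * P x * (u x * m x)) with hG'
  have hGd : ∀ x ∈ Icc a b, HasDerivAt G (G' x) x := by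
    intro x hx
    have h1 := (((hΘ x hx).cos.div (hΘ x hx).sin (hs x hx).ne').const_mul κ).mul ((hP x hx).pow 2)
    convert! h1 using 1
    simp only [hG']
    have := (hs x hx).ne'
    have h2 := Real.sin_sq_add_cos_sq (Θ x)
    have e : (-Real.sin (Θ x) * Θ' x * Real.sin (Θ x) - Real.cos (Θ x) * (Real.cos (Θ x) * Θ' x)) = - Θ' x := by
      linear_combination (-Θ' x) * h2
    rw [e]
    simp
  have hGc : ContinuousOn G' (Icc a b) := by
    apply ContinuousOn.add
    · exact (continuousOn_const.mul (hΘ'.neg.div (hsc.pow 2) (fun x hx => pow_ne_zero 2 (hs x hx).ne'))).mul (hPc.pow 2)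
    · exact (continuousOn_const.mul (hcc.div hsc (fun x hx => (hs x hx).ne'))).mul
        ((continuousOn_const.mul hPc).mul (hu.mul hmc))
  have hGi : ∫ x in a..b, G' x = 0 := by
    rw [intervalIntegral.integral_eq_sub_of_hasDerivAt (f := G)]
    · simp [hG, hPa, hPb]
    · rwa [uIcc_of_le hab]
    · exact hGc.intervalIntegrable_of_Icc hab
  have i1 : IntervalIntegrable (fun x => q x * P x ^ 2) volume a b :=
    (hqc.mul (hPc.pow 2)).intervalIntegrable_of_Icc hab
  have i2 : IntervalIntegrable (fun x => u x ^ 2 * m x) volume a b :=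
    ((hu.pow 2).mul hmc).intervalIntegrable_of_Icc hab
  have key : ∫ x in a..b, G' x ≤ ∫ x in a..b, (u x ^ 2 * m x - κ ^ 2 * (q x * P x ^ 2)) := by
    apply intervalIntegral.integral_mono_on hab (hGc.intervalIntegrable_of_Icc hab)
      (i2.sub (i1.const_mul _))
    intro x hx
    have h := hineq x hx
    have hsx := hs x hx
    set s := Real.sin (Θ x)
    set c := Real.cos (Θ x)
    set F := κ * (c / s) with hF
    have h3 : κ ^ 2 * q x + m x * F ^ 2 ≤ κ * (Θ' x / s ^ 2) := by
      have : κ ^ 2 * q x + m x * F ^ 2 = κ * ((κ * (m x * c ^ 2 + q x * s ^ 2)) / s ^ 2) := by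
        rw [hF]; field_simp; ring
      rw [this]; gcongr
    have h4 : 0 ≤ m x * (u x - F * P x) ^ 2 := mul_nonneg (hmpos x).le (sq_nonneg _)
    have h5 := mul_le_mul_of_nonneg_right h3 (sq_nonneg (P x))
    have h6 : κ * (-(Θ' x) / s ^ 2) = - (κ * (Θ' x / s ^ 2)) := by ring
    simp only [hG']
    change κ * (-(Θ' x) / s ^ 2) * P x ^ 2 + F * _ ≤ _
    rw [h6]
    nlinarith
  rw [hGi, intervalIntegral.integral_sub i2 (i1.const_mul _), intervalIntegral.integral_const_mul] at key
  linarith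

lemma dual {κ : ℝ} {m w u u' P : ℝ → ℝ} (hm : Continuous m) (hw : Continuous w)
    (hwpos : ∀ x, 0 < w x)
    (hu : ∀ x ∈ Icc (0:ℝ) 1, HasDerivAt u (u' x) x) (hu' : ContinuousOn u' (Icc 0 1))
    (hP : ∀ x ∈ Icc (0:ℝ) 1, HasDerivAt P (u x * m x) x)
    (hP0 : P 0 = 0) (hP1 : P 1 = 0)
    (h : κ ^ 2 * ∫ x in (0:ℝ)..1, (w x)⁻¹ * P x ^ 2 ≤ ∫ x in (0:ℝ)..1, u x ^ 2 * m x) :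
    κ ^ 2 * ∫ x in (0:ℝ)..1, u x ^ 2 * m x ≤ ∫ x in (0:ℝ)..1, u' x ^ 2 * w x := by
  have hPc : ContinuousOn P (Icc 0 1) := fun x hx => (hP x hx).continuousAt.continuousWithinAt
  have huc : ContinuousOn u (Icc 0 1) := fun x hx => (hu x hx).continuousAt.continuousWithinAt
  have h01 : (0:ℝ) ≤ 1 := zero_le_one
  have hqc : Continuous (fun x => (w x)⁻¹) := hw.inv₀ (fun x => (hwpos x).ne')
  have ibp := intervalIntegral.integral_mul_deriv_eq_deriv_mul (a := 0) (b := 1) (u := u) (v := P)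
    (u' := u') (v' := fun x => u x * m x) (by rwa [uIcc_of_le h01]) (by rwa [uIcc_of_le h01])
    (hu'.intervalIntegrable_of_Icc h01)
    ((huc.mul hm.continuousOn).intervalIntegrable_of_Icc h01)
  have i1 : IntervalIntegrable (fun x => (w x)⁻¹ * P x ^ 2) volume 0 1 :=
    (hqc.continuousOn.mul (hPc.pow 2)).intervalIntegrable_of_Icc h01
  have i2 : IntervalIntegrable (fun x => u' x ^ 2 * w x) volume 0 1 :=
    ((hu'.pow 2).mul hw.continuousOn).intervalIntegrable_of_Icc h01
  have i3 : IntervalIntegrable (fun x => u' x * P x) volume 0 1 :=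
    (hu'.mul hPc).intervalIntegrable_of_Icc h01
  have key : ∫ x in (0:ℝ)..1, (- 2 * κ ^ 2) * (u' x * P x) ≤
      ∫ x in (0:ℝ)..1, (u' x ^ 2 * w x + κ ^ 4 * ((w x)⁻¹ * P x ^ 2)) := by
    apply intervalIntegral.integral_mono_on h01 (i3.const_mul _) (i2.add (i1.const_mul _))
    intro x hx
    have hwx := hwpos x
    have : u' x ^ 2 * w x + κ ^ 4 * ((w x)⁻¹ * P x ^ 2) - (- 2 * κ ^ 2) * (u' x * P x)
      = w x * (u' x + κ ^ 2 * (w x)⁻¹ * P x) ^ 2 := by field_simp; ring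
    have := mul_nonneg hwx.le (sq_nonneg (u' x + κ ^ 2 * (w x)⁻¹ * P x))
    linarith
  rw [intervalIntegral.integral_add i2 (i1.const_mul _), intervalIntegral.integral_const_mul,
    intervalIntegral.integral_const_mul] at key
  have e : ∫ x in (0:ℝ)..1, u x * (u x * m x) = ∫ x in (0:ℝ)..1, u x ^ 2 * m x := by
    congr 1; ext x; ring
  rw [e, hP0, hP1] at ibp
  have := mul_le_mul_of_nonneg_left h (sq_nonneg κ)
  nlinarith

lemma field_lip {m q B : ℝ} (hm : 0 ≤ m) (hq : 0 ≤ q) (hB : m + q ≤ B) (s t : ℝ) :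
    |(m * Real.cos s ^ 2 + q * Real.sin s ^ 2) - (m * Real.cos t ^ 2 + q * Real.sin t ^ 2)|
      ≤ B * |s - t| := by
  have e : (m * Real.cos s ^ 2 + q * Real.sin s ^ 2) - (m * Real.cos t ^ 2 + q * Real.sin t ^ 2)
      = (q - m) * (Real.sin (s + t) * Real.sin (s - t)) := by
    have h1 := Real.sin_sq_add_cos_sq s
    have h2 := Real.sin_sq_add_cos_sq t
    rw [Real.sin_add, Real.sin_sub]
    have a1 : Real.cos s ^ 2 = 1 - Real.sin s ^ 2 := by linarith
    have a2 : Real.cos t ^ 2 = 1 - Real.sin t ^ 2 := by linarith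
    ring_nf
    rw [a1, a2]; ring
  rw [e, abs_mul, abs_mul]
  have h1 : |q - m| ≤ B := by rw [abs_le]; constructor <;> linarith
  have h2 := Real.abs_sin_le_one (s + t)
  have h3 : |Real.sin (s - t)| ≤ |s - t| := Real.abs_sin_le_abs
  have : |Real.sin (s + t)| * |Real.sin (s - t)| ≤ 1 * |s - t| := by gcongr
  calc _ ≤ B * (1 * |s - t|) := by
        apply mul_le_mul h1 this (by positivity) (by linarith)
    _ = _ := by ring

lemma field_bound {m q B : ℝ} (hm : 0 ≤ m) (hq : 0 ≤ q) (hB : m + q ≤ B) (s : ℝ) :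
    0 ≤ m * Real.cos s ^ 2 + q * Real.sin s ^ 2 ∧ m * Real.cos s ^ 2 + q * Real.sin s ^ 2 ≤ B := by
  have h1 := Real.sin_sq_add_cos_sq s
  constructor
  · positivity
  · nlinarith [mul_nonneg hm (sq_nonneg (Real.sin s)), mul_nonneg hq (sq_nonneg (Real.cos s))]

lemma ode_exists {m q : ℝ → ℝ} {B k : ℝ} (hm : Continuous m) (hq : Continuous q)
    (hm0 : ∀ x, 0 ≤ m x) (hq0 : ∀ x, 0 ≤ q x) (hB : ∀ x, m x + q x ≤ B) (hk : 0 ≤ k) :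
    ∃ θ : ℝ → ℝ, Continuous θ ∧ θ 0 = 0 ∧ ∀ x ∈ Icc (0:ℝ) 1,
      HasDerivAt θ (k * (m x * Real.cos (θ x) ^ 2 + q x * Real.sin (θ x) ^ 2)) x := by
  have hB0 : 0 ≤ B := le_trans (add_nonneg (hm0 0) (hq0 0)) (hB 0)
  let f : ℝ → ℝ → ℝ := fun t y => k * (m t * Real.cos y ^ 2 + q t * Real.sin y ^ 2)
  let L : NNReal := ⟨k * B, by positivity⟩
  have hL : (L : ℝ) = k * B := rfl
  have t0 : (0:ℝ) ∈ Icc (-1:ℝ) 2 := by constructor <;> norm_num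
  have hpl : IsPicardLindelof f (⟨0, t0⟩ : Icc (-1:ℝ) 2) 0 (2 * L) 0 L L := by
    constructor
    · intro t ht
      apply LipschitzOnWith.of_dist_le_mul
      intro x _ y _
      rw [Real.dist_eq, Real.dist_eq, hL]
      have := field_lip (hm0 t) (hq0 t) (hB t) x y
      simp only [f, ← mul_sub]
      rw [abs_mul, abs_of_nonneg hk, mul_assoc]
      gcongr
    · intro x _
      apply Continuous.continuousOn
      fun_prop
    · intro t _ x _
      have := field_bound (hm0 t) (hq0 t) (hB t) x
      rw [hL, Real.norm_eq_abs, abs_of_nonneg (mul_nonneg hk this.1)]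
      exact mul_le_mul_of_nonneg_left this.2 hk
    · have : max ((2:ℝ) - 0) (0 - (-1)) = 2 := by norm_num
      show (L:ℝ) * max ((2:ℝ) - 0) (0 - (-1)) ≤ _
      rw [this]
      push_cast
      linarith
  obtain ⟨α, hα0, hα⟩ := hpl.exists_eq_forall_mem_Icc_hasDerivWithinAt₀
  have hc : ContinuousOn α (Icc (-1) 2) := fun x hx => (hα x hx).continuousWithinAt
  have h12 : (-1:ℝ) ≤ 2 := by norm_num
  have heq : ∀ x ∈ Icc (-1:ℝ) 2, IccExtend h12 ((Icc (-1:ℝ) 2).domRestrict α) x = α x := by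
    intro x hx
    rw [IccExtend_of_mem _ _ hx]; rfl
  refine ⟨IccExtend h12 ((Icc (-1:ℝ) 2).domRestrict α), hc.domRestrict.Icc_extend', ?_, ?_⟩
  · rw [heq 0 t0]; exact hα0
  · intro x hx
    have hx' : x ∈ Icc (-1:ℝ) 2 := ⟨by linarith [hx.1], by linarith [hx.2]⟩
    have hn : Icc (-1:ℝ) 2 ∈ 𝓝 x := Icc_mem_nhds (by linarith [hx.1]) (by linarith [hx.2])
    rw [heq x hx']
    apply ((hα x hx').hasDerivAt hn).congr_of_eventuallyEq
    filter_upwards [hn] with y hy using heq y hy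

lemma ode_hits {m q : ℝ → ℝ} {B K : ℝ} (hm : Continuous m) (hq : Continuous q)
    (hm0 : ∀ x, 0 ≤ m x) (hq0 : ∀ x, 0 ≤ q x) (hB : ∀ x, m x + q x ≤ B) (hK : 0 ≤ K)
    (hend : ∀ θ : ℝ → ℝ, Continuous θ → θ 0 = 0 → (∀ x ∈ Icc (0:ℝ) 1,
      HasDerivAt θ (K * (m x * Real.cos (θ x) ^ 2 + q x * Real.sin (θ x) ^ 2)) x) →
      Real.pi ≤ θ 1) :
    ∃ k : ℝ, 0 ≤ k ∧ k ≤ K ∧ ∃ θ : ℝ → ℝ, Continuous θ ∧ θ 0 = 0 ∧ θ 1 = Real.pi ∧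
      ∀ x ∈ Icc (0:ℝ) 1,
      HasDerivAt θ (k * (m x * Real.cos (θ x) ^ 2 + q x * Real.sin (θ x) ^ 2)) x := by
  have hB0 : 0 ≤ B := le_trans (add_nonneg (hm0 0) (hq0 0)) (hB 0)
  have hex : ∀ k : ℝ, ∃ θ : ℝ → ℝ, 0 ≤ k → Continuous θ ∧ θ 0 = 0 ∧ ∀ x ∈ Icc (0:ℝ) 1,
      HasDerivAt θ (k * (m x * Real.cos (θ x) ^ 2 + q x * Real.sin (θ x) ^ 2)) x := by
    intro k
    by_cases hk : 0 ≤ k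
    · obtain ⟨θ, h⟩ := ode_exists hm hq hm0 hq0 hB hk
      exact ⟨θ, fun _ => h⟩
    · exact ⟨fun _ => 0, fun h => absurd h hk⟩
  choose θ hθ using hex
  let f : ℝ → ℝ → ℝ → ℝ := fun k t y => k * (m t * Real.cos y ^ 2 + q t * Real.sin y ^ 2)
  let L : NNReal := ⟨K * B + 1, by positivity⟩
  have hL : (L : ℝ) = K * B + 1 := rfl
  have hL0 : (L : ℝ) ≠ 0 := by rw [hL]; positivity
  have est : ∀ k ∈ Icc 0 K, ∀ k' ∈ Icc 0 K,
      |θ k 1 - θ k' 1| ≤ |k - k'| * (B / L * (Real.exp L - 1)) := by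
    intro k hk k' hk'
    obtain ⟨c1, z1, d1⟩ := hθ k hk.1
    obtain ⟨c2, z2, d2⟩ := hθ k' hk'.1
    have hlip : ∀ t, LipschitzWith L (f k' t) := by
      intro t
      apply LipschitzWith.of_dist_le_mul
      intro x y
      rw [Real.dist_eq, Real.dist_eq, hL]
      have := field_lip (hm0 t) (hq0 t) (hB t) x y
      simp only [f, ← mul_sub]
      rw [abs_mul, abs_of_nonneg hk'.1]
      calc _ ≤ K * (B * |x - y|) := mul_le_mul hk'.2 this (abs_nonneg _) hK
        _ ≤ _ := by nlinarith [abs_nonneg (x - y)]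
    have := dist_le_of_approx_trajectories_ODE (v := f k') (a := 0) (b := 1) (f := θ k) (g := θ k')
      (f' := fun t => f k t (θ k t)) (g' := fun t => f k' t (θ k' t)) (δ := 0)
      (εf := |k - k'| * B) (εg := 0) hlip c1.continuousOn
      (fun t ht => (d1 t (Ico_subset_Icc_self ht)).hasDerivWithinAt) ?_ c2.continuousOn
      (fun t ht => (d2 t (Ico_subset_Icc_self ht)).hasDerivWithinAt) ?_ ?_ 1 (by simp)
    · rw [gronwallBound_of_K_ne_0 hL0, Real.dist_eq] at this
      simp only [sub_zero, mul_one, zero_mul, zero_add, add_zero] at this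
      calc _ ≤ _ := this
        _ = _ := by ring
    · intro t _
      have := field_bound (hm0 t) (hq0 t) (hB t) (θ k t)
      rw [Real.dist_eq]
      simp only [f, ← sub_mul]
      rw [abs_mul, abs_of_nonneg this.1]
      exact mul_le_mul_of_nonneg_left this.2 (abs_nonneg _)
    · intro t _; simp
    · simp [z1, z2]
  have hcont : ContinuousOn (fun k => θ k 1) (Icc 0 K) := by
    have hC : 0 ≤ B / L * (Real.exp L - 1) := by
      apply mul_nonneg (div_nonneg hB0 L.2)
      have := Real.add_one_le_exp (L:ℝ)
      have := L.2
      change 0 ≤ (L:ℝ) at this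
      linarith
    apply LipschitzOnWith.continuousOn (K := ⟨B / L * (Real.exp L - 1), hC⟩)
    apply LipschitzOnWith.of_dist_le_mul
    intro k hk k' hk'
    rw [Real.dist_eq, Real.dist_eq]
    refine (est k hk k' hk').trans (le_of_eq ?_)
    rw [mul_comm]; rfl
  have hz : θ 0 1 = 0 := by
    obtain ⟨c, z, dd⟩ := hθ 0 le_rfl
    have := intervalIntegral.integral_eq_sub_of_hasDerivAt (a := 0) (b := 1) (f := θ 0) (f' := fun _ => 0)
      (by rw [uIcc_of_le zero_le_one]; intro x hx; simpa using dd x hx) (by simp)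
    simp [z] at this
    exact this.symm
  have hKend : Real.pi ≤ θ K 1 := by
    obtain ⟨c, z, dd⟩ := hθ K hK
    exact hend _ c z dd
  obtain ⟨k, hk, hk1⟩ := intermediate_value_Icc hK hcont
    (show Real.pi ∈ Icc (θ 0 1) (θ K 1) from ⟨by rw [hz]; exact Real.pi_pos.le, hKend⟩)
  obtain ⟨c, z, dd⟩ := hθ k hk.1
  exact ⟨k, hk.1, hk.2, θ k, c, z, hk1, dd⟩

lemma theta_diff {m q θ : ℝ → ℝ} {k a b : ℝ} (hm : Continuous m) (hq : Continuous q)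
    (hθc : Continuous θ) (ha : 0 ≤ a) (hab : a ≤ b) (hb : b ≤ 1)
    (hθ : ∀ x ∈ Icc (0:ℝ) 1,
      HasDerivAt θ (k * (m x * Real.cos (θ x) ^ 2 + q x * Real.sin (θ x) ^ 2)) x) :
    θ b - θ a = k * ∫ x in a..b, (m x * Real.cos (θ x) ^ 2 + q x * Real.sin (θ x) ^ 2) := by
  rw [← intervalIntegral.integral_const_mul]
  symm
  apply intervalIntegral.integral_eq_sub_of_hasDerivAt
  · rw [uIcc_of_le hab]
    exact fun x hx => hθ x ⟨ha.trans hx.1, hx.2.trans hb⟩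
  · apply Continuous.intervalIntegrable
    fun_prop

lemma theta_mono {m q θ : ℝ → ℝ} {k a b : ℝ} (hm : Continuous m) (hq : Continuous q)
    (hm0 : ∀ x, 0 ≤ m x) (hq0 : ∀ x, 0 ≤ q x) (hk : 0 ≤ k)
    (hθc : Continuous θ) (ha : 0 ≤ a) (hab : a ≤ b) (hb : b ≤ 1)
    (hθ : ∀ x ∈ Icc (0:ℝ) 1,
      HasDerivAt θ (k * (m x * Real.cos (θ x) ^ 2 + q x * Real.sin (θ x) ^ 2)) x) :
    θ a ≤ θ b := by
  have := theta_diff hm hq hθc ha hab hb hθ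
  have h2 : 0 ≤ ∫ x in a..b, (m x * Real.cos (θ x) ^ 2 + q x * Real.sin (θ x) ^ 2) := by
    apply intervalIntegral.integral_nonneg hab
    intro x _
    have := hm0 x
    have := hq0 x
    positivity
  nlinarith [mul_nonneg hk h2]

lemma theta_lower {m w θ : ℝ → ℝ} {k a b d W : ℝ} (hm : Continuous m) (hw : Continuous w)
    (hd : 0 < d) (hdm : ∀ x, d ≤ m x) (hwpos : ∀ x, 0 < w x)
    (hW : ∫ x in (0:ℝ)..1, w x ≤ W) (hk : 0 ≤ k)
    (hθc : Continuous θ) (ha : 0 ≤ a) (hab : a ≤ b) (hb : b ≤ 1)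
    (hθ : ∀ x ∈ Icc (0:ℝ) 1,
      HasDerivAt θ (k * (m x * Real.cos (θ x) ^ 2 + (w x)⁻¹ * Real.sin (θ x) ^ 2)) x) :
    k * ((b - a) / (1 / d + W) - 1 / (4 * (1 / d + W))) ≤ θ b - θ a := by
  have hqc : Continuous (fun x => (w x)⁻¹) := hw.inv₀ (fun x => (hwpos x).ne')
  rw [theta_diff hm hqc hθc ha hab hb hθ]
  apply mul_le_mul_of_nonneg_left _ hk
  have hwi : ∀ a b, IntervalIntegrable w volume a b := fun a b => hw.intervalIntegrable a b
  have hW1 : ∫ x in a..b, w x ≤ W := by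
    refine le_trans ?_ hW
    apply intervalIntegral.integral_mono_interval ha hab hb _ (hwi 0 1)
    exact Eventually.of_forall (fun x => (hwpos x).le)
  have hW0 : 0 ≤ W := le_trans (intervalIntegral.integral_nonneg zero_le_one
    (fun x _ => (hwpos x).le)) hW
  set A := 1 / d + W with hA
  have hApos : 0 < A := by positivity
  have key : ∫ x in a..b, (1 / A - (1 / d + w x) / (4 * A ^ 2)) ≤
      ∫ x in a..b, (m x * Real.cos (θ x) ^ 2 + (w x)⁻¹ * Real.sin (θ x) ^ 2) := by
    apply intervalIntegral.integral_mono_on hab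
    · apply Continuous.intervalIntegrable; fun_prop
    · apply Continuous.intervalIntegrable; fun_prop
    · intro x _
      have hwx := hwpos x
      set y := 1 / d + w x with hy
      have hy0 : 0 < y := by positivity
      have h1 : 1 / A - y / (4 * A ^ 2) ≤ 1 / y := by
        have : 1 / y - (1 / A - y / (4 * A ^ 2)) = (1 / y) * (1 - y / (2 * A)) ^ 2 := by
          field_simp; ring
        have : 0 ≤ (1 / y) * (1 - y / (2 * A)) ^ 2 := by positivity
        linarith
      have h2 : 1 / y ≤ m x := by
        refine le_trans ?_ (hdm x)
        rw [div_le_iff₀ hy0, hy]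
        have : d * (1 / d + w x) = 1 + d * w x := by field_simp
        rw [this]
        nlinarith [mul_pos hd hwx]
      have h3 : 1 / y ≤ (w x)⁻¹ := by
        rw [← one_div]
        apply one_div_le_one_div_of_le hwx
        rw [hy]; have : 0 < 1 / d := by positivity
        linarith
      have hcs := Real.sin_sq_add_cos_sq (θ x)
      have h4 := mul_le_mul_of_nonneg_right h2 (sq_nonneg (Real.cos (θ x)))
      have h5 := mul_le_mul_of_nonneg_right h3 (sq_nonneg (Real.sin (θ x)))
      have h6 : 1 / y = 1 / y * Real.cos (θ x) ^ 2 + 1 / y * Real.sin (θ x) ^ 2 := by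
        rw [← mul_add, add_comm, hcs, mul_one]
      linarith
  refine le_trans ?_ key
  have e : ∫ x in a..b, (1 / A - (1 / d + w x) / (4 * A ^ 2)) =
      (b - a) / A - ((b - a) / d + ∫ x in a..b, w x) / (4 * A ^ 2) := by
    rw [intervalIntegral.integral_sub (by simp) (by apply Continuous.intervalIntegrable; fun_prop),
      intervalIntegral.integral_div, intervalIntegral.integral_div,
      intervalIntegral.integral_add intervalIntegrable_const (hwi a b)]
    simp
    ring
  rw [e]
  have h1 : (b - a) / d + ∫ x in a..b, w x ≤ A := by
    rw [hA]
    have : (b - a) / d ≤ 1 / d := by gcongr; linarith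
    linarith
  have h2 : ((b - a) / d + ∫ x in a..b, w x) / (4 * A ^ 2) ≤ A / (4 * A ^ 2) := by gcongr
  have h3 : A / (4 * A ^ 2) = 1 / (4 * A) := by field_simp
  linarith

lemma theta_upper {m q θ : ℝ → ℝ} {k B : ℝ} (hm : Continuous m) (hq : Continuous q)
    (hm0 : ∀ x, 0 ≤ m x) (hq0 : ∀ x, 0 ≤ q x) (hB : ∀ x, m x + q x ≤ B) (hk : 0 ≤ k)
    (hθc : Continuous θ)
    (hθ : ∀ x ∈ Icc (0:ℝ) 1,
      HasDerivAt θ (k * (m x * Real.cos (θ x) ^ 2 + q x * Real.sin (θ x) ^ 2)) x) :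
    θ 1 - θ 0 ≤ k * B := by
  rw [theta_diff hm hq hθc le_rfl zero_le_one le_rfl hθ]
  apply mul_le_mul_of_nonneg_left _ hk
  have : ∫ x in (0:ℝ)..1, (m x * Real.cos (θ x) ^ 2 + q x * Real.sin (θ x) ^ 2)
      ≤ ∫ x in (0:ℝ)..1, B := by
    apply intervalIntegral.integral_mono_on zero_le_one
    · apply Continuous.intervalIntegrable; fun_prop
    · simp
    · exact fun x _ => (field_bound (hm0 x) (hq0 x) (hB x) _).2
  simpa using this

lemma eigenfun {m w θ : ℝ → ℝ} {k : ℝ} (hm : Continuous m) (hw : Continuous w)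
    (hwpos : ∀ x, 0 < w x) (hk : 0 < k)
    (hθc : Continuous θ) (h0 : θ 0 = 0) (h1 : θ 1 = Real.pi)
    (hθ : ∀ x ∈ Icc (0:ℝ) 1,
      HasDerivAt θ (k * (m x * Real.cos (θ x) ^ 2 + (w x)⁻¹ * Real.sin (θ x) ^ 2)) x) :
    ∃ u u' : ℝ → ℝ, MemV0 m u u' ∧ u 0 ≠ 0 ∧
      ∫ x in (0:ℝ)..1, u' x ^ 2 * w x = k ^ 2 * ∫ x in (0:ℝ)..1, u x ^ 2 * m x := by
  have hqc : Continuous (fun x => (w x)⁻¹) := hw.inv₀ (fun x => (hwpos x).ne')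
  set g : ℝ → ℝ := fun x => k * (Real.sin (θ x) * Real.cos (θ x)) * (m x - (w x)⁻¹) with hg
  have hgc : Continuous g := by fun_prop
  set r : ℝ → ℝ := fun x => Real.exp (∫ t in (0:ℝ)..x, g t) with hr
  have hrd : ∀ x, HasDerivAt r (r x * g x) x := fun x =>
    (hgc.integral_hasStrictDerivAt 0 x).hasDerivAt.exp
  have hrc : Continuous r := continuous_iff_continuousAt.2 fun x => (hrd x).continuousAt
  set χ : ℝ → ℝ := fun x => r x * Real.cos (θ x) with hχ
  set ψ : ℝ → ℝ := fun x => r x * Real.sin (θ x) with hψ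
  have hχc : Continuous χ := by fun_prop
  have hψc : Continuous ψ := by fun_prop
  have hχd : ∀ x ∈ Icc (0:ℝ) 1, HasDerivAt χ (-(k * ψ x * (w x)⁻¹)) x := by
    intro x hx
    convert! (hrd x).mul (hθ x hx).cos using 1
    simp only [hψ, hg]
    have h := Real.sin_sq_add_cos_sq (θ x)
    linear_combination k * r x * Real.sin (θ x) * (w x)⁻¹ * h
  have hψd : ∀ x ∈ Icc (0:ℝ) 1, HasDerivAt ψ (k * (χ x * m x)) x := by
    intro x hx
    convert! (hrd x).mul (hθ x hx).sin using 1
    simp only [hχ, hg]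
    have h := Real.sin_sq_add_cos_sq (θ x)
    linear_combination (- k * r x * Real.cos (θ x) * m x) * h
  have hψ0 : ψ 0 = 0 := by simp [hψ, h0]
  have hψ1 : ψ 1 = 0 := by simp [hψ, h1]
  refine ⟨χ, fun x => -(k * ψ x * (w x)⁻¹), ⟨⟨hχd, ?_⟩, ?_⟩, ?_, ?_⟩
  · apply Continuous.continuousOn; fun_prop
  · have := intervalIntegral.integral_eq_sub_of_hasDerivAt (a := 0) (b := 1)
      (by rwa [uIcc_of_le zero_le_one]) (by apply Continuous.intervalIntegrable; fun_prop : IntervalIntegrable (fun x => k * (χ x * m x)) volume 0 1)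
    rw [intervalIntegral.integral_const_mul, hψ0, hψ1, sub_zero] at this
    exact (mul_eq_zero.1 this).resolve_left hk.ne'
  · simp [hχ, hr, h0]
  · have ibp := intervalIntegral.integral_mul_deriv_eq_deriv_mul (a := 0) (b := 1) (u := χ) (v := ψ)
      (by rwa [uIcc_of_le zero_le_one]) (by rwa [uIcc_of_le zero_le_one])
      (by apply Continuous.intervalIntegrable; fun_prop)
      (by apply Continuous.intervalIntegrable; fun_prop)
    rw [hψ0, hψ1] at ibp
    have e1 : ∫ x in (0:ℝ)..1, χ x * (k * (χ x * m x)) = k * ∫ x in (0:ℝ)..1, χ x ^ 2 * m x := by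
      rw [← intervalIntegral.integral_const_mul]; congr 1; ext x; ring
    have e2 : ∫ x in (0:ℝ)..1, -(k * ψ x * (w x)⁻¹) * ψ x = - (k * ∫ x in (0:ℝ)..1, ψ x ^ 2 * (w x)⁻¹) := by
      rw [← intervalIntegral.integral_const_mul, ← intervalIntegral.integral_neg]; congr 1; ext x; ring
    have e3 : ∫ x in (0:ℝ)..1, (-(k * ψ x * (w x)⁻¹)) ^ 2 * w x
        = k ^ 2 * ∫ x in (0:ℝ)..1, ψ x ^ 2 * (w x)⁻¹ := by
      rw [← intervalIntegral.integral_const_mul]; congr 1; ext x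
      have := (hwpos x).ne'
      field_simp
    rw [e1, e2] at ibp
    rw [e3]
    have : k * (∫ x in (0:ℝ)..1, χ x ^ 2 * m x) = k * ∫ x in (0:ℝ)..1, ψ x ^ 2 * (w x)⁻¹ := by
      linarith
    rw [mul_left_cancel₀ hk.ne' this]

lemma gap {m q u P θ : ℝ → ℝ} {k K B δ γ L : ℝ}
    (hm : Continuous m) (hq : Continuous q)
    (hm0 : ∀ x, 0 < m x) (hq0 : ∀ x, 0 ≤ q x) (hB : ∀ x, m x + q x ≤ B)
    (hk : 0 ≤ k) (hkK : k ≤ K) (hγ : 0 ≤ γ) (hγ1 : γ ≤ 1) (hδ : 0 < δ)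
    (hL : L = (K + 1) * B + 1) (hγB : γ * B ≤ δ * Real.exp (-L))
    (hθc : Continuous θ) (h0 : θ 0 = 0) (h1 : θ 1 = Real.pi)
    (hθ : ∀ x ∈ Icc (0:ℝ) 1,
      HasDerivAt θ (k * (m x * Real.cos (θ x) ^ 2 + q x * Real.sin (θ x) ^ 2)) x)
    (hl : δ * Real.exp L < Real.pi - θ (1/2)) (hr : δ < θ (1/2))
    (hu : ContinuousOn u (Icc 0 1))
    (hP : ∀ x ∈ Icc (0:ℝ) 1, HasDerivAt P (u x * m x) x)
    (hP0 : P 0 = 0) (hPh : P (1/2) = 0) (hP1 : P 1 = 0) :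
    (k + γ) ^ 2 * ∫ x in (0:ℝ)..1, q x * P x ^ 2 ≤ ∫ x in (0:ℝ)..1, u x ^ 2 * m x := by
  have hB0 : 0 ≤ B := le_trans (add_nonneg (hm0 0).le (hq0 0)) (hB 0)
  have hm0' := fun x => (hm0 x).le
  have hK : 0 ≤ K := hk.trans hkK
  have hL0 : 0 < L := by rw [hL]; positivity
  have hPc : ContinuousOn P (Icc 0 1) := fun x hx => (hP x hx).continuousAt.continuousWithinAt
  -- pointwise inequality
  have main : ∀ x s h, |s - θ x| = h → γ * B ≤ h →
      (k + γ) * (m x * Real.cos s ^ 2 + q x * Real.sin s ^ 2) ≤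
      k * (m x * Real.cos (θ x) ^ 2 + q x * Real.sin (θ x) ^ 2) + L * h := by
    intro x s h hs hh
    have a1 := field_lip (hm0' x) (hq0 x) (hB x) s (θ x)
    have a2 := field_bound (hm0' x) (hq0 x) (hB x) (θ x)
    rw [hs] at a1
    have a3 := (le_abs_self _).trans a1
    set X := m x * Real.cos s ^ 2 + q x * Real.sin s ^ 2
    set Y := m x * Real.cos (θ x) ^ 2 + q x * Real.sin (θ x) ^ 2
    have hh0 : 0 ≤ h := le_trans (by positivity) hh
    have b1 : (k + γ) * X ≤ (k + γ) * (Y + B * h) :=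
      mul_le_mul_of_nonneg_left (by linarith) (by linarith)
    have b2 : γ * Y ≤ γ * B := mul_le_mul_of_nonneg_left a2.2 hγ
    have b3 : (k + γ) * (B * h) ≤ (K + 1) * (B * h) :=
      mul_le_mul_of_nonneg_right (by linarith) (by positivity)
    rw [hL]
    nlinarith
  have hh : (0:ℝ) ≤ 1/2 := by norm_num
  have hh' : (1/2:ℝ) ≤ 1 := by norm_num
  have subl : Icc (0:ℝ) (1/2) ⊆ Icc 0 1 := Icc_subset_Icc le_rfl hh'
  have subr : Icc (1/2:ℝ) 1 ⊆ Icc 0 1 := Icc_subset_Icc hh le_rfl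
  have hsmall : ∀ y, -L ≤ y → γ * B ≤ δ * Real.exp y := by
    intro y hy
    refine hγB.trans ?_
    gcongr
  have left := picone (a := 0) (b := 1/2) (κ := k + γ) (m := m) (q := q) (u := u) (P := P)
    (Θ := fun x => θ x + δ * Real.exp (L * x))
    (Θ' := fun x => k * (m x * Real.cos (θ x) ^ 2 + q x * Real.sin (θ x) ^ 2) + L * (δ * Real.exp (L * x)))
    hh hm hq hm0 (hu.mono subl) (fun x hx => hP x (subl hx)) hP0 hPh (by linarith)
    (by
      intro x hx
      have e := ((((hasDerivAt_id x).const_mul L).exp).const_mul δ)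
      convert! (hθ x (subl hx)).add e using 1
      simp; ring)
    (by apply Continuous.continuousOn; fun_prop)
    (by
      intro x hx
      have := theta_mono hm hq hm0' hq0 hk hθc le_rfl hx.1 (subl hx).2 hθ
      rw [h0] at this
      positivity)
    (by
      intro x hx
      have := theta_mono hm hq hm0' hq0 hk hθc hx.1 hx.2 hh' hθ
      have h2 : δ * Real.exp (L * x) ≤ δ * Real.exp L := by
        gcongr; nlinarith [(subl hx).2]
      linarith)
    (by
      intro x hx
      apply main
      · rw [add_sub_cancel_left, abs_of_pos (by positivity)]
      · apply hsmall; nlinarith [hx.1])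
  have right := picone (a := 1/2) (b := 1) (κ := k + γ) (m := m) (q := q) (u := u) (P := P)
    (Θ := fun x => θ x - δ * Real.exp (-L * x))
    (Θ' := fun x => k * (m x * Real.cos (θ x) ^ 2 + q x * Real.sin (θ x) ^ 2) + L * (δ * Real.exp (-L * x)))
    hh' hm hq hm0 (hu.mono subr) (fun x hx => hP x (subr hx)) hPh hP1 (by linarith)
    (by
      intro x hx
      have e := ((((hasDerivAt_id x).const_mul (-L)).exp).const_mul δ)
      convert! (hθ x (subr hx)).sub e using 1
      simp; ring)
    (by apply Continuous.continuousOn; fun_prop)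
    (by
      intro x hx
      have := theta_mono hm hq hm0' hq0 hk hθc hh hx.1 hx.2 hθ
      have h2 : δ * Real.exp (-L * x) ≤ δ * 1 := by
        gcongr; rw [Real.exp_le_one_iff]; nlinarith [(subr hx).1]
      linarith)
    (by
      intro x hx
      have := theta_mono hm hq hm0' hq0 hk hθc (subr hx).1 hx.2 le_rfl hθ
      have h2 : 0 < δ * Real.exp (-L * x) := by positivity
      linarith)
    (by
      intro x hx
      apply main
      · rw [sub_sub_cancel_left, abs_neg, abs_of_pos (by positivity)]
      · apply hsmall; nlinarith [hx.2])
  have i1 : ContinuousOn (fun x => q x * P x ^ 2) (Icc 0 1) := hq.continuousOn.mul (hPc.pow 2)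
  have i2 : ContinuousOn (fun x => u x ^ 2 * m x) (Icc 0 1) := (hu.pow 2).mul hm.continuousOn
  rw [← intervalIntegral.integral_add_adjacent_intervals
      ((i1.mono subl).intervalIntegrable_of_Icc hh) ((i1.mono subr).intervalIntegrable_of_Icc hh'),
    ← intervalIntegral.integral_add_adjacent_intervals
      ((i2.mono subl).intervalIntegrable_of_Icc hh) ((i2.mono subr).intervalIntegrable_of_Icc hh')]
  linarith

lemma sigma_cont {σ σ' : ℝ → ℝ}
    (h : ∀ x y : ℝ, 0 ≤ x → x ≤ y → y ≤ 1 → σ y - σ x = ∫ z in x..y, σ' z) :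
    ContinuousOn σ (Icc 0 1) := by
  by_cases hi : IntegrableOn σ' (Icc 0 1)
  · have hc : ContinuousOn (fun x => ∫ z in (0:ℝ)..x, σ' z) (Icc 0 1) := by
      have := intervalIntegral.continuousOn_primitive_interval (a := 0) (b := 1) (f := σ')
        (μ := volume) (by rwa [uIcc_of_le zero_le_one])
      rwa [uIcc_of_le zero_le_one] at this
    have : ContinuousOn (fun x => σ 0 + ∫ z in (0:ℝ)..x, σ' z) (Icc 0 1) :=
      continuousOn_const.add hc
    refine this.congr ?_
    intro x hx
    have := h 0 x le_rfl hx.1 hx.2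
    simp only
    linarith
  · have hz : ∀ x y, 0 ≤ x → x ≤ y → y ≤ 1 → ¬ IntegrableOn σ' (Icc x y) → σ x = σ y := by
      intro x y hx hxy hy hn
      have h1 := h x y hx hxy hy
      rw [intervalIntegral.integral_undef] at h1
      · linarith
      · rwa [intervalIntegrable_iff_integrableOn_Icc_of_le hxy]
    have hnl : ¬ LocallyIntegrableOn σ' (Icc 0 1) volume := fun hl =>
      hi (hl.integrableOn_isCompact isCompact_Icc)
    unfold LocallyIntegrableOn at hnl
    push Not at hnl
    obtain ⟨p, hp, hpn⟩ := hnl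
    have hbad : ∀ x y, 0 ≤ x → y ≤ 1 → Icc x y ∈ 𝓝[Icc 0 1] p → x ≤ y → σ x = σ y := by
      intro x y hx hy hn hxy
      exact hz x y hx hxy hy (fun hI => hpn ⟨_, hn, hI⟩)
    have h01 : σ 0 = σ 1 := hz 0 1 le_rfl zero_le_one le_rfl hi
    have hconst : ∀ x ∈ Icc (0:ℝ) 1, σ x = σ 0 := by
      intro x hx
      rcases lt_trichotomy x p with hlt | heq | hgt
      · rw [h01]
        apply hbad x 1 hx.1 le_rfl _ hx.2
        have : Ioi x ∩ Icc 0 1 ∈ 𝓝[Icc 0 1] p :=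
          Filter.inter_mem (mem_nhdsWithin_of_mem_nhds (Ioi_mem_nhds hlt)) self_mem_nhdsWithin
        filter_upwards [this] with y hy using ⟨le_of_lt hy.1, hy.2.2⟩
      · by_cases hl : IntegrableOn σ' (Icc 0 x)
        · rw [h01]
          apply hz x 1 hx.1 hx.2 le_rfl
          intro hr
          apply hi
          rw [← Icc_union_Icc_eq_Icc hx.1 hx.2]
          exact hl.union hr
        · exact (hz 0 x le_rfl hx.1 hx.2 hl).symm
      · symm
        apply hbad 0 x le_rfl hx.2 _ hx.1
        have : Iio x ∩ Icc 0 1 ∈ 𝓝[Icc 0 1] p :=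
          Filter.inter_mem (mem_nhdsWithin_of_mem_nhds (Iio_mem_nhds hgt)) self_mem_nhdsWithin
        filter_upwards [this] with y hy using ⟨hy.2.1, le_of_lt hy.1⟩
    exact continuousOn_const.congr hconst

lemma primitive {u m : ℝ → ℝ} (hu : ContinuousOn u (Icc 0 1)) (hm : Continuous m) :
    ∃ P : ℝ → ℝ, (∀ x ∈ Icc (0:ℝ) 1, P x = ∫ t in (0:ℝ)..x, u t * m t) ∧
      ∀ x ∈ Icc (0:ℝ) 1, HasDerivAt P (u x * m x) x := by
  set v := IccExtend (zero_le_one' ℝ) ((Icc (0:ℝ) 1).domRestrict u) with hv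
  have hvc : Continuous v := hu.domRestrict.Icc_extend'
  have heq : ∀ x ∈ Icc (0:ℝ) 1, v x = u x := by
    intro x hx
    rw [hv, IccExtend_of_mem _ _ hx]; rfl
  refine ⟨fun x => ∫ t in (0:ℝ)..x, v t * m t, ?_, ?_⟩
  · intro x hx
    apply intervalIntegral.integral_congr
    intro t ht
    rw [uIcc_of_le hx.1] at ht
    simp only
    rw [heq t ⟨ht.1, ht.2.trans hx.2⟩]
  · intro x hx
    rw [← heq x hx]
    exact ((hvc.mul hm).integral_hasStrictDerivAt 0 x).hasDerivAt

lemma norm_pos' {u m : ℝ → ℝ} (hu : ContinuousOn u (Icc 0 1)) (hm : Continuous m)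
    (hm0 : ∀ x, 0 < m x) (hne : NotZeroOn01 u) : 0 < ∫ x in (0:ℝ)..1, u x ^ 2 * m x := by
  obtain ⟨c, hc, hcu⟩ := hne
  apply intervalIntegral.integral_pos zero_lt_one ((hu.pow 2).mul hm.continuousOn)
  · intro x _
    exact mul_nonneg (sq_nonneg _) (hm0 x).le
  · exact ⟨c, hc, mul_pos (by positivity : 0 < u c ^ 2) (hm0 c)⟩

lemma memV0_cont {μ u u' : ℝ → ℝ} (h : MemV0 μ u u') : ContinuousOn u (Icc 0 1) :=
  fun x hx => (h.1.1 x hx).continuousAt.continuousWithinAt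

lemma memV0_comb {μ u₁ u₁' u₂ u₂' : ℝ → ℝ} (hμ : Continuous μ) (h1 : MemV0 μ u₁ u₁')
    (h2 : MemV0 μ u₂ u₂') (a b : ℝ) :
    MemV0 μ (fun x => a * u₁ x + b * u₂ x) (fun x => a * u₁' x + b * u₂' x) := by
  refine ⟨⟨fun x hx => ((h1.1.1 x hx).const_mul a).add ((h2.1.1 x hx).const_mul b),
    (continuousOn_const.mul h1.1.2).add (continuousOn_const.mul h2.1.2)⟩, ?_⟩
  have i1 : IntervalIntegrable (fun x => u₁ x * μ x) volume 0 1 :=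
    ((memV0_cont h1).mul hμ.continuousOn).intervalIntegrable_of_Icc zero_le_one
  have i2 : IntervalIntegrable (fun x => u₂ x * μ x) volume 0 1 :=
    ((memV0_cont h2).mul hμ.continuousOn).intervalIntegrable_of_Icc zero_le_one
  have : ∫ x in (0:ℝ)..1, (a * u₁ x + b * u₂ x) * μ x =
      ∫ x in (0:ℝ)..1, (a * (u₁ x * μ x) + b * (u₂ x * μ x)) := by
    congr 1; ext x; ring
  rw [this, intervalIntegral.integral_add (i1.const_mul a) (i2.const_mul b),
    intervalIntegral.integral_const_mul, intervalIntegral.integral_const_mul, h1.2, h2.2]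
  simp

lemma rayleigh_bdd {σ μ u₁ u₁' u₂ u₂' : ℝ → ℝ} (hσ : Continuous σ) (hμ : Continuous μ)
    (hμ0 : ∀ x, 0 < μ x) (h1 : MemV0 μ u₁ u₁') (h2 : MemV0 μ u₂ u₂')
    (hind : ∀ a b : ℝ, (∀ x ∈ Set.Icc (0:ℝ) 1, a * u₁ x + b * u₂ x = 0) → a = 0 ∧ b = 0) :
    BddAbove { s : ℝ | ∃ a b : ℝ,
        NotZeroOn01 (fun x => a * u₁ x + b * u₂ x) ∧
        s = Rayleigh σ μ (fun x => a * u₁ x + b * u₂ x)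
              (fun x => a * u₁' x + b * u₂' x) } := by
  have c1 := memV0_cont h1
  have c2 := memV0_cont h2
  set g11 := ∫ x in (0:ℝ)..1, u₁ x ^ 2 * μ x with hg11
  set g12 := ∫ x in (0:ℝ)..1, u₁ x * u₂ x * μ x with hg12
  set g22 := ∫ x in (0:ℝ)..1, u₂ x ^ 2 * μ x with hg22
  set M := ∫ x in (0:ℝ)..1, (u₁' x ^ 2 + u₂' x ^ 2) * σ x ^ 2 * μ x with hM
  have hN : ∀ a b : ℝ, ∫ x in (0:ℝ)..1, (a * u₁ x + b * u₂ x) ^ 2 * μ x =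
      a ^ 2 * g11 + 2 * a * b * g12 + b ^ 2 * g22 := by
    intro a b
    have i1 : IntervalIntegrable (fun x => u₁ x ^ 2 * μ x) volume 0 1 :=
      ((c1.pow 2).mul hμ.continuousOn).intervalIntegrable_of_Icc zero_le_one
    have i2 : IntervalIntegrable (fun x => u₂ x ^ 2 * μ x) volume 0 1 :=
      ((c2.pow 2).mul hμ.continuousOn).intervalIntegrable_of_Icc zero_le_one
    have i3 : IntervalIntegrable (fun x => u₁ x * u₂ x * μ x) volume 0 1 :=
      ((c1.mul c2).mul hμ.continuousOn).intervalIntegrable_of_Icc zero_le_one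
    have : ∫ x in (0:ℝ)..1, (a * u₁ x + b * u₂ x) ^ 2 * μ x = ∫ x in (0:ℝ)..1,
       (a ^ 2 * (u₁ x ^ 2 * μ x) + 2 * a * b * (u₁ x * u₂ x * μ x) + b ^ 2 * (u₂ x ^ 2 * μ x)) := by
      congr 1; ext x; ring
    rw [this, intervalIntegral.integral_add ((i1.const_mul _).add (i3.const_mul _)) (i2.const_mul _),
      intervalIntegral.integral_add (i1.const_mul _) (i3.const_mul _),
      intervalIntegral.integral_const_mul, intervalIntegral.integral_const_mul,
      intervalIntegral.integral_const_mul]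
  have hE : ∀ a b : ℝ, ∫ x in (0:ℝ)..1, (a * u₁' x + b * u₂' x) ^ 2 * σ x ^ 2 * μ x ≤
      (a ^ 2 + b ^ 2) * M := by
    intro a b
    rw [hM, ← intervalIntegral.integral_const_mul]
    apply intervalIntegral.integral_mono_on zero_le_one
    · exact (((((continuousOn_const.mul h1.1.2).add (continuousOn_const.mul h2.1.2)).pow 2).mul
        (hσ.continuousOn.pow 2)).mul hμ.continuousOn).intervalIntegrable_of_Icc zero_le_one
    · exact (continuousOn_const.mul ((((h1.1.2.pow 2).add (h2.1.2.pow 2)).mul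
        (hσ.continuousOn.pow 2)).mul hμ.continuousOn)).intervalIntegrable_of_Icc zero_le_one
    · intro x _
      have : (a * u₁' x + b * u₂' x) ^ 2 ≤ (a ^ 2 + b ^ 2) * (u₁' x ^ 2 + u₂' x ^ 2) := by
        nlinarith [sq_nonneg (a * u₂' x - b * u₁' x)]
      have h3 := mul_le_mul_of_nonneg_right (mul_le_mul_of_nonneg_right this (sq_nonneg (σ x))) (hμ0 x).le
      linarith
  have hM0 : 0 ≤ M := by
    apply intervalIntegral.integral_nonneg zero_le_one
    intro x _
    have := hμ0 x
    positivity
  have hpos : ∀ a b : ℝ, ¬ (a = 0 ∧ b = 0) → 0 < a ^ 2 * g11 + 2 * a * b * g12 + b ^ 2 * g22 := by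
    intro a b hab
    rw [← hN]
    apply norm_pos' (memV0_cont (memV0_comb hμ h1 h2 a b)) hμ hμ0
    by_contra hcon
    unfold NotZeroOn01 at hcon
    push Not at hcon
    exact hab (hind a b hcon)
  have p11 : 0 < g11 := by simpa using hpos 1 0 (by simp)
  have p22 : 0 < g22 := by simpa using hpos 0 1 (by simp)
  have pdet : 0 < g11 * g22 - g12 ^ 2 := by
    have := hpos g22 (-g12) (by simp [p22.ne'])
    have e : g22 ^ 2 * g11 + 2 * g22 * -g12 * g12 + (-g12) ^ 2 * g22 = g22 * (g11 * g22 - g12 ^ 2) := by ring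
    rw [e] at this
    exact pos_of_mul_pos_right this p22.le
  refine ⟨M * (g11 + g22) / (g11 * g22 - g12 ^ 2), ?_⟩
  rintro s ⟨a, b, hne, rfl⟩
  have hNpos := norm_pos' (memV0_cont (memV0_comb hμ h1 h2 a b)) hμ hμ0 hne
  unfold Rayleigh
  rw [div_le_div_iff₀ hNpos pdet, hN]
  have h4 := hE a b
  calc _ ≤ (a ^ 2 + b ^ 2) * M * (g11 * g22 - g12 ^ 2) := mul_le_mul_of_nonneg_right h4 pdet.le
    _ ≤ _ := by
      have : (g11 * g22 - g12 ^ 2) * (a ^ 2 + b ^ 2) ≤ (g11 + g22) * (a ^ 2 * g11 + 2 * a * b * g12 + b ^ 2 * g22) := by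
        nlinarith [sq_nonneg (g11 * a + g12 * b), sq_nonneg (g12 * a + g22 * b)]
      have := mul_le_mul_of_nonneg_left this hM0
      linarith

lemma poly_int (a b c : ℝ) : ∫ x in (0:ℝ)..1, (a * (x - 1/2) + b * (x ^ 2 - x + 1/6) - c) ^ 2
    = a ^ 2 / 12 + b ^ 2 / 180 + c ^ 2 := by
  set e := -a/2 + b/6 - c with he
  have hd : ∀ x : ℝ, HasDerivAt (fun x : ℝ => b ^ 2 / 5 * x ^ 5 + (b * (a - b) / 2) * x ^ 4
      + (((a - b) ^ 2 + 2 * b * e) / 3) * x ^ 3 + ((a - b) * e) * x ^ 2 + e ^ 2 * x)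
      ((a * (x - 1/2) + b * (x ^ 2 - x + 1/6) - c) ^ 2) x := by
    intro x
    convert! (((((hasDerivAt_pow 5 x).const_mul (b ^ 2 / 5)).add
      ((hasDerivAt_pow 4 x).const_mul (b * (a - b) / 2))).add
      ((hasDerivAt_pow 3 x).const_mul (((a - b) ^ 2 + 2 * b * e) / 3))).add
      ((hasDerivAt_pow 2 x).const_mul ((a - b) * e))).add ((hasDerivAt_id x).const_mul (e ^ 2)) using 1
    rw [he]; norm_num; ring
  rw [intervalIntegral.integral_eq_sub_of_hasDerivAt (fun x _ => hd x)
    (by apply Continuous.intervalIntegrable; fun_prop)]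
  rw [he]; ring

lemma test_space {σ μ : ℝ → ℝ} {d D : ℝ} (hd : 0 < d) (hσ : Continuous σ) (hμ : Continuous μ)
    (hdμ : ∀ x, d ≤ μ x) (hμD : ∀ x, μ x ≤ D) (hσ2 : ∫ x in (0:ℝ)..1, σ x ^ 2 ≤ D ^ 2)
    (hμ1 : ∫ x in (0:ℝ)..1, μ x = 1) :
    ∃ u₁ u₁' u₂ u₂' : ℝ → ℝ, MemV0 μ u₁ u₁' ∧ MemV0 μ u₂ u₂' ∧
      (∀ a b : ℝ, (∀ x ∈ Set.Icc (0:ℝ) 1, a * u₁ x + b * u₂ x = 0) → a = 0 ∧ b = 0) ∧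
      sSup { s : ℝ | ∃ a b : ℝ,
        NotZeroOn01 (fun x => a * u₁ x + b * u₂ x) ∧
        s = Rayleigh σ μ (fun x => a * u₁ x + b * u₂ x)
              (fun x => a * u₁' x + b * u₂' x) } ≤ 360 * D ^ 3 / d := by
  have hμ0 : ∀ x, 0 < μ x := fun x => hd.trans_le (hdμ x)
  have hD : 0 < D := (hμ0 0).trans_le (hμD 0)
  have mean : ∀ v v' : ℝ → ℝ, Continuous v → Continuous v' → (∀ x, HasDerivAt v (v' x) x) →
      MemV0 μ (fun x => v x - ∫ t in (0:ℝ)..1, v t * μ t) v' := by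
    intro v v' hv hv' hvd
    refine ⟨⟨fun x _ => (hvd x).sub_const _, hv'.continuousOn⟩, ?_⟩
    simp only [sub_mul]
    rw [intervalIntegral.integral_sub (by apply Continuous.intervalIntegrable; fun_prop)
      (by apply Continuous.intervalIntegrable; fun_prop), intervalIntegral.integral_const_mul, hμ1]
    simp
  set c1 := ∫ t in (0:ℝ)..1, (t - 1/2) * μ t with hc1
  set c2 := ∫ t in (0:ℝ)..1, (t ^ 2 - t + 1/6) * μ t with hc2
  have m1 := mean (fun x => x - 1/2) (fun _ => 1) (by fun_prop) (by fun_prop)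
    (fun x => (hasDerivAt_id x).sub_const _)
  have m2 := mean (fun x => x ^ 2 - x + 1/6) (fun x => 2 * x - 1) (by fun_prop) (by fun_prop)
    (fun x => by
      convert! ((hasDerivAt_pow 2 x).sub (hasDerivAt_id x)).add_const (1/6 : ℝ) using 1
      simp)
  refine ⟨_, _, _, _, m1, m2, ?_, ?_⟩
  · intro a b h
    have e0 := h 0 (by simp)
    have e1 := h 1 (by simp)
    have e2 := h (1/2) (by constructor <;> norm_num)
    have ha : a = 0 := by linarith
    have hb : b = 0 := by subst ha; linarith
    exact ⟨ha, hb⟩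
  · apply Real.sSup_le _ (by positivity)
    rintro s ⟨a, b, hne, rfl⟩
    have hNpos := norm_pos' (memV0_cont (memV0_comb hμ m1 m2 a b)) hμ hμ0 hne
    unfold Rayleigh
    rw [div_le_iff₀ hNpos]
    have hE : ∫ x in (0:ℝ)..1, (a * 1 + b * (2 * x - 1)) ^ 2 * σ x ^ 2 * μ x ≤
        (2 * (a ^ 2 + b ^ 2) * D) * ∫ x in (0:ℝ)..1, σ x ^ 2 := by
      rw [← intervalIntegral.integral_const_mul]
      apply intervalIntegral.integral_mono_on zero_le_one
      · apply Continuous.intervalIntegrable; fun_prop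
      · apply Continuous.intervalIntegrable; fun_prop
      · intro x hx
        have h1 : (a * 1 + b * (2 * x - 1)) ^ 2 ≤ 2 * (a ^ 2 + b ^ 2) := by
          have : (2 * x - 1) ^ 2 ≤ 1 := by nlinarith [hx.1, hx.2]
          nlinarith [sq_nonneg (a - b * (2 * x - 1)), mul_le_mul_of_nonneg_left this (sq_nonneg b)]
        calc _ ≤ 2 * (a ^ 2 + b ^ 2) * σ x ^ 2 * D := by
              apply mul_le_mul _ (hμD x) (hμ0 x).le (by positivity)
              exact mul_le_mul_of_nonneg_right h1 (sq_nonneg _)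
          _ = _ := by ring
    have hN : d * (a ^ 2 / 12 + b ^ 2 / 180 + (a * c1 + b * c2) ^ 2) ≤
        ∫ x in (0:ℝ)..1, (a * (x - 1/2 - c1) + b * (x ^ 2 - x + 1/6 - c2)) ^ 2 * μ x := by
      rw [← poly_int, ← intervalIntegral.integral_const_mul]
      apply intervalIntegral.integral_mono_on zero_le_one
      · apply Continuous.intervalIntegrable; fun_prop
      · apply Continuous.intervalIntegrable; fun_prop
      · intro x hx
        have := mul_le_mul_of_nonneg_right (hdμ x) (sq_nonneg (a * (x - 1/2 - c1) + b * (x ^ 2 - x + 1/6 - c2)))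
        have e : a * (x - 1/2) + b * (x ^ 2 - x + 1/6) - (a * c1 + b * c2) = a * (x - 1/2 - c1) + b * (x ^ 2 - x + 1/6 - c2) := by ring
        rw [e]; linarith
    refine hE.trans ?_
    refine le_trans ?_ (mul_le_mul_of_nonneg_left hN (by positivity))
    calc _ ≤ (2 * (a ^ 2 + b ^ 2) * D) * D ^ 2 := mul_le_mul_of_nonneg_left hσ2 (by positivity)
      _ = 360 * D ^ 3 / d * (d * ((a ^ 2 + b ^ 2) / 180)) := by field_simp; ring
      _ ≤ _ := by
        gcongr
        nlinarith [sq_nonneg a, sq_nonneg (a * c1 + b * c2)]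

lemma rayleigh_ge {σ μ u u' : ℝ → ℝ} {c : ℝ} (hμ : Continuous μ)
    (hμ0 : ∀ x, 0 < μ x) (h : MemV0 μ u u') (hne : NotZeroOn01 u)
    (hc : c * ∫ x in (0:ℝ)..1, u x ^ 2 * μ x ≤ ∫ x in (0:ℝ)..1, u' x ^ 2 * (σ x ^ 2 * μ x)) :
    c ≤ Rayleigh σ μ u u' := by
  have hN := norm_pos' (memV0_cont h) hμ hμ0 hne
  unfold Rayleigh
  rw [le_div_iff₀ hN]
  simpa only [mul_assoc] using hc

lemma core {d D : ℝ} (hd : 0 < d) (hdD : d < D) :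
    ∃ ε C : ℝ, 0 < ε ∧ 0 < C ∧ ∀ σ μ : ℝ → ℝ, Continuous σ → Continuous μ →
      (∀ x, d ≤ σ x) → (∀ x, d ≤ μ x) → (∀ x, μ x ≤ D) →
      (∫ x in (0:ℝ)..1, σ x ^ 2 ≤ D ^ 2) → (∫ x in (0:ℝ)..1, μ x = 1) →
      ε ≤ lam1 σ μ ∧ lam1 σ μ ≤ C ∧ lam2 σ μ ≤ C ∧ ε ≤ lam2 σ μ - lam1 σ μ := by
  have hD : 0 < D := hd.trans hdD
  have hpi := Real.pi_pos
  obtain ⟨B, hBdef⟩ : ∃ B, B = D + 1 / d ^ 3 := ⟨_, rfl⟩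
  have hB0 : 0 < B := by rw [hBdef]; positivity
  obtain ⟨A, hA⟩ : ∃ A, A = 1 / d + D ^ 3 := ⟨_, rfl⟩
  have hA0 : 0 < A := by rw [hA]; positivity
  obtain ⟨K, hK⟩ : ∃ K, K = 2 * Real.pi * A := ⟨_, rfl⟩
  have hK0 : 0 < K := by rw [hK]; positivity
  obtain ⟨L, hL⟩ : ∃ L, L = (K + 1) * B + 1 := ⟨_, rfl⟩
  have hL0 : 0 < L := by rw [hL]; positivity
  obtain ⟨cc, hcc⟩ : ∃ cc, cc = Real.pi / B / (4 * A) := ⟨_, rfl⟩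
  have hcc0 : 0 < cc := by rw [hcc]; positivity
  obtain ⟨δ, hδ⟩ : ∃ δ, δ = cc * Real.exp (-L) / 2 := ⟨_, rfl⟩
  have hδ0 : 0 < δ := by rw [hδ]; positivity
  obtain ⟨γ, hγ⟩ : ∃ γ, γ = min 1 (δ * Real.exp (-L) / B) := ⟨_, rfl⟩
  have hγ0 : 0 < γ := by rw [hγ]; positivity
  have hγ1 : γ ≤ 1 := by rw [hγ]; exact min_le_left _ _
  have hγB : γ * B ≤ δ * Real.exp (-L) := by
    rw [← le_div_iff₀ hB0, hγ]; exact min_le_right _ _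
  refine ⟨min (1 / 2 * (1 / B) ^ 2) (γ ^ 2 / 2), 1 / 2 * (360 * D ^ 3 / d), by positivity,
    by positivity, ?_⟩
  intro σ μ hσ hμ hdσ hdμ hμD hσ2 hμ1
  have hμ0 : ∀ x, 0 < μ x := fun x => hd.trans_le (hdμ x)
  have hσ0 : ∀ x, 0 < σ x := fun x => hd.trans_le (hdσ x)
  obtain ⟨w, hw⟩ : ∃ w : ℝ → ℝ, w = fun x => σ x ^ 2 * μ x := ⟨_, rfl⟩
  have hwc : Continuous w := by rw [hw]; fun_prop
  have hwd : ∀ x, d ^ 3 ≤ w x := by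
    intro x
    rw [hw]
    show d ^ 3 ≤ σ x ^ 2 * μ x
    have h1 := hdσ x
    have h2 := hdμ x
    calc d ^ 3 = d ^ 2 * d := by ring
      _ ≤ _ := by gcongr
  have hw0 : ∀ x, 0 < w x := fun x => lt_of_lt_of_le (by positivity) (hwd x)
  have hqc : Continuous (fun x => (w x)⁻¹) := hwc.inv₀ (fun x => (hw0 x).ne')
  have hq0 : ∀ x, 0 ≤ (w x)⁻¹ := fun x => (inv_pos.2 (hw0 x)).le
  have hB : ∀ x, μ x + (w x)⁻¹ ≤ B := by
    intro x
    have : (w x)⁻¹ ≤ 1 / d ^ 3 := by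
      rw [one_div]; exact inv_anti₀ (by positivity) (hwd x)
    rw [hBdef]; linarith [hμD x]
  have hW : ∫ x in (0:ℝ)..1, w x ≤ D ^ 3 := by
    have : ∫ x in (0:ℝ)..1, w x ≤ ∫ x in (0:ℝ)..1, D * σ x ^ 2 := by
      apply intervalIntegral.integral_mono_on zero_le_one
      · exact hwc.intervalIntegrable _ _
      · apply Continuous.intervalIntegrable; fun_prop
      · intro x _
        rw [hw]
        have := mul_le_mul_of_nonneg_left (hμD x) (sq_nonneg (σ x))
        simp only
        linarith
    rw [intervalIntegral.integral_const_mul] at this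
    calc _ ≤ _ := this
      _ ≤ D * D ^ 2 := mul_le_mul_of_nonneg_left hσ2 hD.le
      _ = _ := by ring
  -- eigenvalue existence
  obtain ⟨k, hk, hkK, θ, hθc, hθ0, hθ1, hθ⟩ := ode_hits hμ hqc (fun x => (hμ0 x).le) hq0 hB hK0.le
    (by
      intro θ hθc h0 hθ
      have := theta_lower hμ hwc hd hdμ hw0 hW hK0.le hθc le_rfl zero_le_one le_rfl hθ
      rw [h0, ← hA, hK] at this
      have e : 2 * Real.pi * A * ((1 - 0) / A - 1 / (4 * A)) = Real.pi * (3 / 2) := by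
        field_simp; ring
      rw [e] at this
      linarith)
  have hkB : Real.pi / B ≤ k := by
    rw [div_le_iff₀ hB0]
    have := theta_upper hμ hqc (fun x => (hμ0 x).le) hq0 hB hk hθc hθ
    rwa [hθ0, hθ1, sub_zero] at this
  have hk0 : 0 < k := lt_of_lt_of_le (by positivity) hkB
  have hcck : cc ≤ k * (1 / (4 * A)) := by
    rw [hcc, div_eq_mul_one_div (Real.pi / B)]
    gcongr
  have e4 : (1 / 2) / A - 1 / (4 * A) = 1 / (4 * A) := by field_simp; ring
  have hlow : cc ≤ θ (1 / 2) := by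
    have := theta_lower hμ hwc hd hdμ hw0 hW hk hθc le_rfl (by norm_num : (0:ℝ) ≤ 1 / 2)
      (by norm_num) hθ
    rw [hθ0, ← hA, sub_zero, sub_zero, e4] at this
    linarith
  have hhigh : cc ≤ Real.pi - θ (1 / 2) := by
    have := theta_lower hμ hwc hd hdμ hw0 hW hk hθc (by norm_num : (0:ℝ) ≤ 1 / 2)
      (by norm_num) le_rfl hθ
    rw [hθ1, ← hA, (by norm_num : (1:ℝ) - 1 / 2 = 1 / 2), e4] at this
    linarith
  have hδl : δ * Real.exp L < Real.pi - θ (1 / 2) := by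
    have : δ * Real.exp L = cc / 2 := by
      rw [hδ, Real.exp_neg]
      have := Real.exp_pos L
      field_simp
    rw [this]; linarith
  have hδr : δ < θ (1 / 2) := by
    have : Real.exp (-L) ≤ 1 := by rw [Real.exp_le_one_iff]; linarith
    have := mul_le_mul_of_nonneg_left this hcc0.le
    rw [hδ]; linarith
  -- Poincaré-type lower bound
  have low1 : ∀ u u', MemV0 μ u u' → NotZeroOn01 u → (1 / B) ^ 2 ≤ Rayleigh σ μ u u' := by
    intro u u' h hne
    obtain ⟨P, hPe, hPd⟩ := primitive (memV0_cont h) hμ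
    have hP0 : P 0 = 0 := by rw [hPe 0 (by simp)]; simp
    have hP1 : P 1 = 0 := by rw [hPe 1 (by simp)]; exact h.2
    apply rayleigh_ge hμ hμ0 h hne
    have := dual (κ := 1 / B) hμ hwc hw0 h.1.1 h.1.2 hPd hP0 hP1 (by
      have h3 := Real.pi_gt_three
      apply picone (Θ := fun x => 1 + x) (Θ' := fun _ => 1) zero_le_one hμ hqc hμ0 (memV0_cont h)
        hPd hP0 hP1 (by positivity)
      · intro x _
        exact (hasDerivAt_id x).const_add 1
      · exact continuousOn_const
      · intro x hx; linarith [hx.1]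
      · intro x hx; linarith [hx.2]
      · intro x _
        have := (field_bound (hμ0 x).le (hq0 x) (hB x) (1 + x)).2
        rw [one_div, inv_mul_le_iff₀ hB0]
        linarith)
    rw [hw] at this
    exact this
  have low2 : ∀ u₁ u₁' u₂ u₂', MemV0 μ u₁ u₁' → MemV0 μ u₂ u₂' →
      (∀ a b : ℝ, (∀ x ∈ Set.Icc (0:ℝ) 1, a * u₁ x + b * u₂ x = 0) → a = 0 ∧ b = 0) →
      (k + γ) ^ 2 ≤ sSup { s : ℝ | ∃ a b : ℝ,
        NotZeroOn01 (fun x => a * u₁ x + b * u₂ x) ∧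
        s = Rayleigh σ μ (fun x => a * u₁ x + b * u₂ x)
              (fun x => a * u₁' x + b * u₂' x) } := by
    intro u₁ u₁' u₂ u₂' h1 h2 hind
    obtain ⟨a, b, hab, hp⟩ : ∃ a b : ℝ, ¬ (a = 0 ∧ b = 0) ∧
        a * (∫ t in (0:ℝ)..(1/2), u₁ t * μ t) + b * (∫ t in (0:ℝ)..(1/2), u₂ t * μ t) = 0 := by
      by_cases hz : (∫ t in (0:ℝ)..(1/2), u₁ t * μ t) = 0
      · exact ⟨1, 0, by simp, by rw [hz]; simp⟩
      · exact ⟨∫ t in (0:ℝ)..(1/2), u₂ t * μ t, -∫ t in (0:ℝ)..(1/2), u₁ t * μ t,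
          fun h => hz (neg_eq_zero.1 h.2), by ring⟩
    have hV := memV0_comb hμ h1 h2 a b
    have hne : NotZeroOn01 (fun x => a * u₁ x + b * u₂ x) := by
      by_contra hcon
      unfold NotZeroOn01 at hcon
      push Not at hcon
      exact hab (hind a b hcon)
    refine le_trans ?_ (le_csSup (rayleigh_bdd hσ hμ hμ0 h1 h2 hind) ⟨a, b, hne, rfl⟩)
    obtain ⟨P, hPe, hPd⟩ := primitive (memV0_cont hV) hμ
    have hP0 : P 0 = 0 := by rw [hPe 0 (by simp)]; simp
    have hP1 : P 1 = 0 := by rw [hPe 1 (by simp)]; exact hV.2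
    have hPh : P (1 / 2) = 0 := by
      rw [hPe (1/2) (by constructor <;> norm_num)]
      refine Eq.trans ?_ hp
      have sub : Icc (0:ℝ) (1/2) ⊆ Icc 0 1 := Icc_subset_Icc le_rfl (by norm_num)
      have i1 : IntervalIntegrable (fun x => u₁ x * μ x) volume 0 (1/2) :=
        (((memV0_cont h1).mono sub).mul hμ.continuousOn).intervalIntegrable_of_Icc (by norm_num)
      have i2 : IntervalIntegrable (fun x => u₂ x * μ x) volume 0 (1/2) :=
        (((memV0_cont h2).mono sub).mul hμ.continuousOn).intervalIntegrable_of_Icc (by norm_num)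
      rw [← intervalIntegral.integral_const_mul, ← intervalIntegral.integral_const_mul,
        ← intervalIntegral.integral_add (i1.const_mul a) (i2.const_mul b)]
      congr 1; ext x; ring
    apply rayleigh_ge hμ hμ0 hV hne
    have := dual (κ := k + γ) hμ hwc hw0 hV.1.1 hV.1.2 hPd hP0 hP1
      (gap hμ hqc hμ0 hq0 hB hk hkK hγ0.le hγ1 hδ0 hL hγB hθc hθ0 hθ1 hθ hδl hδr (memV0_cont hV)
        hPd hP0 hPh hP1)
    rw [hw] at this
    exact this
  -- conclusion
  obtain ⟨u, u', hV, hu0, hE⟩ := eigenfun hμ hwc hw0 hk0 hθc hθ0 hθ1 hθ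
  have hne : NotZeroOn01 u := ⟨0, by simp, hu0⟩
  have hR : Rayleigh σ μ u u' = k ^ 2 := by
    have hN := norm_pos' (memV0_cont hV) hμ hμ0 hne
    unfold Rayleigh
    rw [div_eq_iff hN.ne', ← hE, hw]
    simp only [mul_assoc]
  have l1a : 1 / 2 * (1 / B) ^ 2 ≤ lam1 σ μ := by
    unfold lam1
    apply mul_le_mul_of_nonneg_left _ (by norm_num)
    refine le_csInf ⟨_, u, u', hV, hne, rfl⟩ ?_
    rintro r ⟨v, v', hv, hvne, rfl⟩
    exact low1 v v' hv hvne
  have l1b : lam1 σ μ ≤ 1 / 2 * k ^ 2 := by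
    unfold lam1
    apply mul_le_mul_of_nonneg_left _ (by norm_num)
    apply csInf_le
    · refine ⟨(1 / B) ^ 2, ?_⟩
      rintro r ⟨v, v', hv, hvne, rfl⟩
      exact low1 v v' hv hvne
    · exact ⟨u, u', hV, hne, hR.symm⟩
  obtain ⟨v₁, v₁', v₂, v₂', hv1, hv2, hvind, hvs⟩ := test_space hd hσ hμ hdμ hμD hσ2 hμ1
  have l2a : 1 / 2 * (k + γ) ^ 2 ≤ lam2 σ μ := by
    unfold lam2
    apply mul_le_mul_of_nonneg_left _ (by norm_num)
    refine le_csInf ⟨_, v₁, v₁', v₂, v₂', hv1, hv2, hvind, rfl⟩ ?_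
    rintro r ⟨u₁, u₁', u₂, u₂', h1, h2, hind, rfl⟩
    exact low2 u₁ u₁' u₂ u₂' h1 h2 hind
  have l2b : lam2 σ μ ≤ 1 / 2 * (360 * D ^ 3 / d) := by
    unfold lam2
    apply mul_le_mul_of_nonneg_left _ (by norm_num)
    refine le_trans (csInf_le ?_ ⟨v₁, v₁', v₂, v₂', hv1, hv2, hvind, rfl⟩) hvs
    refine ⟨(k + γ) ^ 2, ?_⟩
    rintro r ⟨u₁, u₁', u₂, u₂', h1, h2, hind, rfl⟩
    exact low2 u₁ u₁' u₂ u₂' h1 h2 hind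
  have hgap : γ ^ 2 / 2 ≤ lam2 σ μ - lam1 σ μ := by nlinarith [mul_pos hk0 hγ0]
  refine ⟨(min_le_left _ _).trans l1a, ?_, l2b, (min_le_right _ _).trans hgap⟩
  have := sq_nonneg γ
  linarith

lemma rayleigh_congr {σ μ σ₁ μ₁ : ℝ → ℝ} (hσ : ∀ x ∈ Icc (0:ℝ) 1, σ₁ x = σ x)
    (hμ : ∀ x ∈ Icc (0:ℝ) 1, μ₁ x = μ x) : lam1 σ₁ μ₁ = lam1 σ μ ∧ lam2 σ₁ μ₁ = lam2 σ μ := by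
  have hR : ∀ u u', Rayleigh σ₁ μ₁ u u' = Rayleigh σ μ u u' := by
    intro u u'
    unfold Rayleigh
    congr 1
    · apply intervalIntegral.integral_congr
      intro x hx
      rw [uIcc_of_le zero_le_one] at hx
      simp only [hσ x hx, hμ x hx]
    · apply intervalIntegral.integral_congr
      intro x hx
      rw [uIcc_of_le zero_le_one] at hx
      simp only [hμ x hx]
  have hM : ∀ u u', MemV0 μ₁ u u' ↔ MemV0 μ u u' := by
    intro u u'
    unfold MemV0
    have : ∫ x in (0:ℝ)..1, u x * μ₁ x = ∫ x in (0:ℝ)..1, u x * μ x := by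
      apply intervalIntegral.integral_congr
      intro x hx
      rw [uIcc_of_le zero_le_one] at hx
      simp only [hμ x hx]
    rw [this]
  constructor
  · unfold lam1; simp only [hR, hM]
  · unfold lam2; simp only [hR, hM]

/-- Uniform bounds on the first two variational Neumann eigenvalues and on the spectral gap
over the nonparametric class `Θ_α`. -/
theorem statement1 (d D α : ℝ) (hd : 0 < d) (hdD : d < D) (hα : 0 < α) (hα1 : α ≤ 1) :
    ∃ ε C : ℝ, 0 < ε ∧ 0 < C ∧
      ∀ σ σ' μ : ℝ → ℝ,
        -- σ absolutely continuous with a.e. derivative σ'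
        (∀ x y : ℝ, 0 ≤ x → x ≤ y → y ≤ 1 → σ y - σ x = ∫ z in x..y, σ' z) →
        -- H¹-type bound on σ
        Real.sqrt (∫ x in (0:ℝ)..1, (σ x)^2)
          + Real.sqrt (∫ x in (0:ℝ)..1, (σ' x)^2) ≤ D →
        -- α-Hölder bound on μ
        (∃ M H : ℝ, (∀ x ∈ Set.Icc (0:ℝ) 1, |μ x| ≤ M) ∧
          (∀ x ∈ Set.Icc (0:ℝ) 1, ∀ y ∈ Set.Icc (0:ℝ) 1,
            |μ x - μ y| ≤ H * |x - y| ^ α) ∧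
          M + H ≤ D) →
        -- lower bounds
        (∀ x ∈ Set.Icc (0:ℝ) 1, d ≤ σ x) → (∀ x ∈ Set.Icc (0:ℝ) 1, d ≤ μ x) →
        -- μ is a probability density
        (∫ x in (0:ℝ)..1, μ x) = 1 →
        ε ≤ lam1 σ μ ∧ lam1 σ μ ≤ C ∧ lam2 σ μ ≤ C ∧ ε ≤ lam2 σ μ - lam1 σ μ := by
  obtain ⟨ε, C, hε, hC, hcore⟩ := core hd hdD
  refine ⟨ε, C, hε, hC, ?_⟩
  intro σ σ' μ hσ hH hM hdσ hdμ hμ1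
  have hσc := sigma_cont hσ
  obtain ⟨M, H, hMb, hHb, hMH⟩ := hM
  have hH0 : 0 ≤ H := by
    have := hHb 0 (by simp) 1 (by simp)
    have h2 := (abs_nonneg _).trans this
    simpa using h2
  have hμD : ∀ x ∈ Icc (0:ℝ) 1, μ x ≤ D := by
    intro x hx
    have := (le_abs_self _).trans (hMb x hx)
    linarith
  have hμc : ContinuousOn μ (Icc 0 1) := by
    intro x hx
    have ht : Tendsto (fun y => H * |y - x| ^ α) (𝓝[Icc 0 1] x) (𝓝 0) := by
      have hc : Continuous (fun y => H * |y - x| ^ α) := by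
        apply continuous_const.mul
        exact (continuous_abs.comp (continuous_id.sub continuous_const)).rpow_const
          (fun _ => Or.inr hα.le)
      have := (hc.tendsto x).mono_left (nhdsWithin_le_nhds (s := Icc 0 1))
      simpa [Real.zero_rpow hα.ne'] using this
    rw [ContinuousWithinAt, tendsto_iff_dist_tendsto_zero]
    apply squeeze_zero' (Eventually.of_forall fun _ => dist_nonneg) _ ht
    filter_upwards [self_mem_nhdsWithin] with y hy
    rw [Real.dist_eq]
    exact hHb y hy x hx
  have hσ2 : ∫ x in (0:ℝ)..1, σ x ^ 2 ≤ D ^ 2 := by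
    have h1 := Real.sqrt_nonneg (∫ x in (0:ℝ)..1, (σ' x)^2)
    have h2 : Real.sqrt (∫ x in (0:ℝ)..1, (σ x)^2) ≤ D := by linarith
    exact (Real.sqrt_le_left (hd.trans hdD).le).1 h2
  set s := IccExtend (zero_le_one' ℝ) ((Icc (0:ℝ) 1).domRestrict σ) with hs
  set m := IccExtend (zero_le_one' ℝ) ((Icc (0:ℝ) 1).domRestrict μ) with hm
  have hse : ∀ x ∈ Icc (0:ℝ) 1, s x = σ x := by
    intro x hx
    rw [hs, IccExtend_of_mem _ _ hx]; rfl
  have hme : ∀ x ∈ Icc (0:ℝ) 1, m x = μ x := by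
    intro x hx
    rw [hm, IccExtend_of_mem _ _ hx]; rfl
  have := hcore s m hσc.domRestrict.Icc_extend' hμc.domRestrict.Icc_extend'
    (fun x => hdσ _ (projIcc 0 1 zero_le_one x).2) (fun x => hdμ _ (projIcc 0 1 zero_le_one x).2)
    (fun x => hμD _ (projIcc 0 1 zero_le_one x).2)
    (by
      refine le_trans (le_of_eq ?_) hσ2
      apply intervalIntegral.integral_congr
      intro x hx
      rw [uIcc_of_le zero_le_one] at hx
      simp only [hse x hx])
    (by
      refine Eq.trans ?_ hμ1
      apply intervalIntegral.integral_congr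
      intro x hx
      rw [uIcc_of_le zero_le_one] at hx
      exact hme x hx)
  rw [(rayleigh_congr hse hme).1, (rayleigh_congr hse hme).2] at this
  exact this
end

section
/- Suppose in addition that λ > 0, that w is nonconstant, and that w is nondecreasing on [0,1] (i.e. w'(x) ≥ 0 for all x). Then w'(x) > 0 for every x ∈ (0,1); in particular w is strictly increasing on (0,1). -/
/-- If `(λ, w)` solves the weak Neumann eigenproblem for `(σ, μ)` with `λ > 0`, `w`
nonconstant and nondecreasing, then `w' > 0` on `(0,1)`; in particular `w` is strictly
increasing on `(0,1)`. -/
theorem statement3 (σ μ w w' : ℝ → ℝ) (lam : ℝ) (hlam : lam ≠ 0)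
    (hσc : ContinuousOn σ (Set.Icc (0:ℝ) 1)) (hμc : ContinuousOn μ (Set.Icc (0:ℝ) 1))
    (hσpos : ∀ x ∈ Set.Icc (0:ℝ) 1, 0 < σ x) (hμpos : ∀ x ∈ Set.Icc (0:ℝ) 1, 0 < μ x)
    (hw : IsC1On01 w w')
    (heig : ∀ v v' : ℝ → ℝ, IsC1On01 v v' →
      ∫ x in (0:ℝ)..1, w' x * v' x * (σ x)^2 * μ x
        = 2 * lam * ∫ x in (0:ℝ)..1, w x * v x * μ x)
    (hlampos : 0 < lam)
    (hnonconst : ∃ x ∈ Set.Icc (0:ℝ) 1, ∃ y ∈ Set.Icc (0:ℝ) 1, w x ≠ w y)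
    (hmono : ∀ x ∈ Set.Icc (0:ℝ) 1, 0 ≤ w' x) :
    (∀ x ∈ Set.Ioo (0:ℝ) 1, 0 < w' x) ∧ StrictMonoOn w (Set.Ioo (0:ℝ) 1) := by
  obtain ⟨hwd, hw'c⟩ := hw
  have hwc : ContinuousOn w (Set.Icc (0:ℝ) 1) := fun x hx =>
    (hwd x hx).continuousAt.continuousWithinAt
  have hwmono : MonotoneOn w (Set.Icc (0:ℝ) 1) := by
    apply monotoneOn_of_deriv_nonneg (convex_Icc 0 1) hwc
    · intro x hx
      rw [interior_Icc] at hx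
      exact (hwd x (Set.Ioo_subset_Icc_self hx)).differentiableAt.differentiableWithinAt
    · intro x hx
      rw [interior_Icc] at hx
      rw [(hwd x (Set.Ioo_subset_Icc_self hx)).deriv]
      exact hmono x (Set.Ioo_subset_Icc_self hx)
  -- continuous extensions
  have ext : ∀ f : ℝ → ℝ, ContinuousOn f (Set.Icc (0:ℝ) 1) →
      ∃ F : ℝ → ℝ, Continuous F ∧ ∀ x ∈ Set.Icc (0:ℝ) 1, F x = f x := by
    intro f hf
    refine ⟨fun t => f (max 0 (min 1 t)), ?_, ?_⟩
    · apply hf.comp_continuous (by fun_prop)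
      intro t
      exact ⟨le_max_left _ _, max_le zero_le_one (min_le_left _ _)⟩
    · intro x hx
      simp only [min_eq_right hx.2, max_eq_right hx.1]
  obtain ⟨P, hPc, hP⟩ := ext (fun x => w' x * (σ x)^2 * μ x) ((hw'c.mul (hσc.pow 2)).mul hμc)
  obtain ⟨M, hMc, hM⟩ := ext (fun x => w x * μ x) (hwc.mul hμc)
  have prim : ∀ F : ℝ → ℝ, Continuous F → ∀ x, HasDerivAt (fun y => ∫ t in (0:ℝ)..y, F t) (F x) x :=
    fun F hF x => intervalIntegral.integral_hasDerivAt_right (hF.intervalIntegrable _ _)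
      hF.stronglyMeasurable.stronglyMeasurableAtFilter hF.continuousAt
  obtain ⟨G, hGdef⟩ : ∃ G : ℝ → ℝ, G = fun y => ∫ t in (0:ℝ)..y, M t := ⟨_, rfl⟩
  have hGd : ∀ x, HasDerivAt G (M x) x := by rw [hGdef]; exact prim M hMc
  have hGc : Continuous G := continuous_iff_continuousAt.2 fun x => (hGd x).continuousAt
  have hG0 : G 0 = 0 := by simp [hGdef]
  have u01 : Set.uIcc (0:ℝ) 1 = Set.Icc 0 1 := Set.uIcc_of_le zero_le_one
  have hG1 : G 1 = 0 := by
    have h := heig (fun _ => 1) (fun _ => 0)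
      ⟨fun x _ => hasDerivAt_const x 1, continuousOn_const⟩
    simp only [mul_zero, zero_mul, intervalIntegral.integral_zero, mul_one] at h
    have h2 : ∫ x in (0:ℝ)..1, w x * μ x = 0 := by
      have := h.symm
      rcases mul_eq_zero.1 this with h | h
      · exact absurd h (by positivity)
      · exact h
    rw [hGdef]
    refine Eq.trans ?_ h2
    apply intervalIntegral.integral_congr
    intro x hx
    exact hM x (u01 ▸ hx)
  obtain ⟨H, hHdef⟩ : ∃ H : ℝ → ℝ, H = fun y => P y + 2 * lam * G y := ⟨_, rfl⟩
  have hHc : Continuous H := by rw [hHdef]; fun_prop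
  obtain ⟨V, hVdef⟩ : ∃ V : ℝ → ℝ, V = fun y => ∫ t in (0:ℝ)..y, H t := ⟨_, rfl⟩
  have hVd : ∀ x, HasDerivAt V (H x) x := by rw [hVdef]; exact prim H hHc
  have hVc : Continuous V := continuous_iff_continuousAt.2 fun x => (hVd x).continuousAt
  have e1 : ∫ x in (0:ℝ)..1, P x * H x = 2 * lam * ∫ x in (0:ℝ)..1, M x * V x := by
    have h := heig V H ⟨fun x _ => hVd x, hHc.continuousOn⟩
    have a1 : ∫ x in (0:ℝ)..1, P x * H x = ∫ x in (0:ℝ)..1, w' x * H x * (σ x)^2 * μ x := by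
      apply intervalIntegral.integral_congr
      intro x hx
      simp only [hP x (u01 ▸ hx)]; ring
    have a2 : ∫ x in (0:ℝ)..1, M x * V x = ∫ x in (0:ℝ)..1, w x * V x * μ x := by
      apply intervalIntegral.integral_congr
      intro x hx
      simp only [hM x (u01 ▸ hx)]; ring
    rw [a1, a2, h]
  have e2 : ∫ x in (0:ℝ)..1, (M x * V x + G x * H x) = 0 := by
    have hc : Continuous (fun x => M x * V x + G x * H x) := by fun_prop
    rw [intervalIntegral.integral_eq_sub_of_hasDerivAt
      (f := fun x => G x * V x) (fun x _ => (hGd x).mul (hVd x))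
      (hc.intervalIntegrable _ _)]
    simp [hG0, hG1]
  have e3 : ∫ x in (0:ℝ)..1, H x * H x = 0 := by
    have i1 : IntervalIntegrable (fun x => P x * H x) MeasureTheory.volume 0 1 :=
      (hPc.mul hHc).intervalIntegrable _ _
    have i2 : IntervalIntegrable (fun x => M x * V x) MeasureTheory.volume 0 1 :=
      (hMc.mul hVc).intervalIntegrable _ _
    have i3 : IntervalIntegrable (fun x => G x * H x) MeasureTheory.volume 0 1 :=
      (hGc.mul hHc).intervalIntegrable _ _
    rw [intervalIntegral.integral_add i2 i3] at e2
    have : ∫ x in (0:ℝ)..1, H x * H x = ∫ x in (0:ℝ)..1, (P x * H x + 2 * lam * (G x * H x)) := by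
      apply intervalIntegral.integral_congr
      intro x _
      simp only [hHdef]; ring
    rw [this, intervalIntegral.integral_add i1 (i3.const_mul _),
      intervalIntegral.integral_const_mul, e1]
    linear_combination 2 * lam * e2
  have hH0 : ∀ x ∈ Set.Icc (0:ℝ) 1, H x = 0 := by
    intro x hx
    by_contra hne
    have := intervalIntegral.integral_pos (zero_lt_one' ℝ)
      (hHc.mul hHc).continuousOn (fun y _ => mul_self_nonneg (H y))
      ⟨x, hx, mul_self_pos.2 hne⟩
    exact absurd e3 this.ne'
  have key : ∀ x ∈ Set.Icc (0:ℝ) 1, w' x * (σ x)^2 * μ x = -(2 * lam * G x) := by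
    intro x hx
    have := hH0 x hx
    rw [hHdef] at this
    simp only [hP x hx] at this
    linarith
  have hGle : ∀ x ∈ Set.Icc (0:ℝ) 1, G x ≤ 0 := by
    intro x hx
    have h1 := key x hx
    have h2 : 0 ≤ w' x * (σ x)^2 * μ x :=
      mul_nonneg (mul_nonneg (hmono x hx) (sq_nonneg _)) (hμpos x hx).le
    by_contra! h
    have : 0 < 2 * lam * G x := by positivity
    linarith
  have main : ∀ x ∈ Set.Ioo (0:ℝ) 1, 0 < w' x := by
    intro c hc
    have hcI := Set.Ioo_subset_Icc_self hc
    by_contra hneg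
    have hw0 : w' c = 0 := le_antisymm (not_lt.1 hneg) (hmono c hcI)
    have hGc0 : G c = 0 := by
      have := key c hcI
      rw [hw0] at this
      have h3 : 2 * lam * G c = 0 := by linarith
      rcases mul_eq_zero.1 h3 with h | h
      · exact absurd h (by positivity)
      · exact h
    have hmax : IsLocalMax G c := by
      filter_upwards [Icc_mem_nhds hc.1 hc.2] with y hy
      rw [hGc0]; exact hGle y hy
    have hMc0 : w c = 0 := by
      have := hmax.hasDerivAt_eq_zero (hGd c)
      rw [hM c hcI] at this
      exact (mul_eq_zero.1 this).resolve_right (hμpos c hcI).ne'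
    have ftc : ∀ a b, ∫ x in a..b, M x = G b - G a := fun a b =>
      intervalIntegral.integral_eq_sub_of_hasDerivAt (fun x _ => hGd x)
        (hMc.intervalIntegrable _ _)
    have hall : ∀ x ∈ Set.Icc (0:ℝ) 1, w x = 0 := by
      intro x hx
      by_contra hne
      have hMx : M x ≠ 0 := by rw [hM x hx]; exact mul_ne_zero hne (hμpos x hx).ne'
      rcases le_total c x with h | h
      · have hnn : ∀ y ∈ Set.Icc c 1, 0 ≤ M y := by
          intro y hy
          have hyI : y ∈ Set.Icc (0:ℝ) 1 := ⟨hc.1.le.trans hy.1, hy.2⟩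
          rw [hM y hyI]
          exact mul_nonneg (hMc0 ▸ hwmono hcI hyI hy.1) (hμpos y hyI).le
        have := intervalIntegral.integral_pos hc.2 hMc.continuousOn
          (fun y hy => hnn y (Set.Ioc_subset_Icc_self hy))
          ⟨x, ⟨h, hx.2⟩, lt_of_le_of_ne (hnn x ⟨h, hx.2⟩) hMx.symm⟩
        rw [ftc, hG1, hGc0] at this
        simp at this
      · have hnn : ∀ y ∈ Set.Icc 0 c, 0 ≤ - M y := by
          intro y hy
          have hyI : y ∈ Set.Icc (0:ℝ) 1 := ⟨hy.1, hy.2.trans hc.2.le⟩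
          rw [hM y hyI, ← neg_mul]
          have : w y ≤ w c := hwmono hyI hcI hy.2
          exact mul_nonneg (by linarith) (hμpos y hyI).le
        have := intervalIntegral.integral_pos hc.1 hMc.neg.continuousOn
          (fun y hy => hnn y (Set.Ioc_subset_Icc_self hy))
          ⟨x, ⟨hx.1, h⟩, lt_of_le_of_ne (hnn x ⟨hx.1, h⟩) (neg_ne_zero.2 hMx).symm⟩
        simp only [Pi.neg_apply] at this
        rw [intervalIntegral.integral_neg, ftc, hG0, hGc0] at this
        simp at this
    obtain ⟨x, hx, y, hy, hxy⟩ := hnonconst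
    exact hxy (by rw [hall x hx, hall y hy])
  refine ⟨main, ?_⟩
  apply strictMonoOn_of_deriv_pos (convex_Ioo 0 1) (hwc.mono Set.Ioo_subset_Icc_self)
  intro x hx
  rw [interior_Ioo] at hx
  rw [(hwd x (Set.Ioo_subset_Icc_self hx)).deriv]
  exact main x hx
end

section
/- For every x ∈ [0,1] one has σ²(x) u'(x) μ(x) = 2ζ ∫₀ˣ u(y) μ(y) dy; consequently, at every point x ∈ [0,1] where u'(x) ≠ 0, the squared volatility admits the spectral representation σ²(x) = 2ζ (∫₀ˣ u(y) μ(y) dy) / (u'(x) μ(x)). -/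
/-- If `u` is an eigenfunction of the generator `Lf = (σ² μ f')'/(2μ)` with eigenvalue `ζ`
and `u'(0) = 0`, then `σ²(x) u'(x) μ(x) = 2ζ ∫₀ˣ u μ` for every `x ∈ [0,1]`; consequently,
wherever `u'(x) ≠ 0`, `σ²(x) = 2ζ (∫₀ˣ u μ)/(u'(x) μ(x))`. -/
theorem statement4 (σ μ u u' G' : ℝ → ℝ) (ζ : ℝ)
    (hσc : ContinuousOn σ (Set.Icc (0:ℝ) 1)) (hμc : ContinuousOn μ (Set.Icc (0:ℝ) 1))
    (hσpos : ∀ x ∈ Set.Icc (0:ℝ) 1, 0 < σ x) (hμpos : ∀ x ∈ Set.Icc (0:ℝ) 1, 0 < μ x)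
    (hu : ∀ x ∈ Set.Icc (0:ℝ) 1, HasDerivAt u (u' x) x)
    (hu' : ContinuousOn u' (Set.Icc (0:ℝ) 1))
    (hG : ∀ x ∈ Set.Icc (0:ℝ) 1,
      HasDerivAt (fun y => (σ y)^2 * μ y * u' y) (G' x) x)
    (hG' : ContinuousOn G' (Set.Icc (0:ℝ) 1))
    (heig : ∀ x ∈ Set.Icc (0:ℝ) 1, G' x = 2 * ζ * u x * μ x)
    (hu'0 : u' 0 = 0) :
    (∀ x ∈ Set.Icc (0:ℝ) 1,
      (σ x)^2 * u' x * μ x = 2 * ζ * ∫ y in (0:ℝ)..x, u y * μ y) ∧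
    (∀ x ∈ Set.Icc (0:ℝ) 1, u' x ≠ 0 →
      (σ x)^2 = 2 * ζ * (∫ y in (0:ℝ)..x, u y * μ y) / (u' x * μ x)) := by
  have key : ∀ x ∈ Set.Icc (0:ℝ) 1,
      (σ x)^2 * u' x * μ x = 2 * ζ * ∫ y in (0:ℝ)..x, u y * μ y := by
    intro x hx
    have hsub : Set.uIcc 0 x ⊆ Set.Icc (0:ℝ) 1 := by
      rw [Set.uIcc_of_le hx.1]
      exact Set.Icc_subset_Icc_right hx.2
    have h1 := intervalIntegral.integral_eq_sub_of_hasDerivAt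
      (fun y hy => hG y (hsub hy)) (hG'.mono hsub).intervalIntegrable
    have h2 : ∫ y in (0:ℝ)..x, G' y = ∫ y in (0:ℝ)..x, 2 * ζ * (u y * μ y) := by
      apply intervalIntegral.integral_congr
      intro y hy
      simp only [heig y (hsub hy)]
      ring
    rw [h2, intervalIntegral.integral_const_mul] at h1
    rw [h1, hu'0]
    ring
  refine ⟨key, fun x hx hne => ?_⟩
  have hm := (hμpos x hx).ne'
  rw [← key x hx, eq_div_iff (mul_ne_zero hne hm)]
  ring
end

section
/- Then ∫₀¹ u(x) v(x) dμ(x) = ∫₀¹ ∫₀¹ u'(y) v'(z) · μ([0, min(y,z))) · μ([max(y,z), 1]) dy dz. -/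
open MeasureTheory

lemma aux_ind (g : ℝ → ℝ) (hg : ContinuousOn g (Set.Icc (0:ℝ) 1)) :
    Measurable ((Set.Icc (0:ℝ) 1).indicator g) ∧
      ∃ C, ∀ x, ‖(Set.Icc (0:ℝ) 1).indicator g x‖ ≤ C := by
  constructor
  · have h := ContinuousOn.measurable_piecewise (s := Set.Icc (0:ℝ) 1) (f := g)
      (g := fun _ => (0:ℝ)) hg continuousOn_const measurableSet_Icc
    convert h using 1
    exact (Set.piecewise_eq_indicator).symm
  · obtain ⟨C, hC⟩ := isCompact_Icc.exists_bound_of_continuousOn hg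
    refine ⟨max C 0, fun x => ?_⟩
    by_cases hx : x ∈ Set.Icc (0:ℝ) 1
    · rw [Set.indicator_of_mem hx]; exact (hC x hx).trans (le_max_left _ _)
    · rw [Set.indicator_of_notMem hx]; simp

noncomputable def auxF (y x : ℝ) : ℝ := (Set.Ici y).indicator (fun _ => (1:ℝ)) x

lemma auxF_meas : Measurable (fun p : ℝ × ℝ => auxF p.1 p.2) := by
  have : (fun p : ℝ × ℝ => auxF p.1 p.2)
      = {p : ℝ × ℝ | p.1 ≤ p.2}.indicator (fun _ => (1:ℝ)) := by
    ext p; simp [auxF, Set.indicator_apply]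
  rw [this]
  exact measurable_const.indicator (measurableSet_le measurable_fst measurable_snd)

lemma auxF_bd (y x : ℝ) : ‖auxF y x‖ ≤ 1 := by
  unfold auxF Set.indicator; split_ifs <;> simp

lemma auxG_meas (μ : Measure ℝ) [IsProbabilityMeasure μ] :
    Measurable (fun y => μ.real (Set.Ici y)) := by
  apply Antitone.measurable
  intro a b hab
  exact measureReal_mono (Set.Ici_subset_Ici.2 hab)

lemma auxG_bd (μ : Measure ℝ) [IsProbabilityMeasure μ] (y : ℝ) : ‖μ.real (Set.Ici y)‖ ≤ 1 := by
  rw [Real.norm_of_nonneg measureReal_nonneg]; exact measureReal_le_one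

lemma auxF_int (μ : Measure ℝ) (y : ℝ) : ∫ x, auxF y x ∂μ = μ.real (Set.Ici y) := by
  unfold auxF
  rw [integral_indicator measurableSet_Ici]; simp

lemma aux_rep (μ : Measure ℝ) [IsProbabilityMeasure μ]
    (hsupp : μ (Set.Icc (0:ℝ) 1)ᶜ = 0) (u u' : ℝ → ℝ)
    (hu : ∀ x ∈ Set.Icc (0:ℝ) 1, HasDerivAt u (u' x) x)
    (hu' : ContinuousOn u' (Set.Icc (0:ℝ) 1)) (hu0 : ∫ x, u x ∂μ = 0) :
    ∀ x ∈ Set.Icc (0:ℝ) 1, u x = ∫ y in Set.Ioc (0:ℝ) 1,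
      (Set.Icc (0:ℝ) 1).indicator u' y * (auxF y x - μ.real (Set.Ici y)) := by
  obtain ⟨hm, C, hC⟩ := aux_ind u' hu'
  set a := (Set.Icc (0:ℝ) 1).indicator u' with ha
  have h1 : ∀ x ∈ Set.Icc (0:ℝ) 1, u x = u 0 + ∫ y in Set.Ioc (0:ℝ) 1, a y * auxF y x := by
    intro x hx
    have hsub : Set.uIcc 0 x ⊆ Set.Icc (0:ℝ) 1 := by
      rw [Set.uIcc_of_le hx.1]; exact Set.Icc_subset_Icc_right hx.2
    have h := intervalIntegral.integral_eq_sub_of_hasDerivAt (a := 0) (b := x) (f := u) (f' := u')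
      (fun t ht => hu t (hsub ht)) ((hu'.mono hsub).intervalIntegrable)
    have e : (fun y => a y * auxF y x) = (Set.Iic x).indicator a := by
      ext y; simp [auxF, Set.indicator_apply]
    rw [e, setIntegral_indicator measurableSet_Iic, Set.Ioc_inter_Iic, min_eq_right hx.2,
      setIntegral_congr_fun (g := u') measurableSet_Ioc, ← intervalIntegral.integral_of_le hx.1, h]
    · ring
    · intro y hy
      exact Set.indicator_of_mem (s := Set.Icc (0:ℝ) 1) ⟨hy.1.le, hy.2.trans hx.2⟩ _
  have hC0 : 0 ≤ C := (norm_nonneg _).trans (hC 0)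
  have hint : Integrable (fun p : ℝ × ℝ => a p.2 * auxF p.2 p.1)
      (μ.prod (volume.restrict (Set.Ioc (0:ℝ) 1))) := by
    refine Integrable.of_bound (C := C * 1) ?_ (Filter.Eventually.of_forall fun p => ?_)
    · exact ((hm.comp measurable_snd).mul (auxF_meas.comp measurable_swap)).aestronglyMeasurable
    · rw [norm_mul]; exact mul_le_mul (hC _) (auxF_bd _ _) (norm_nonneg _) hC0
  have hae : ∀ᵐ x ∂μ, x ∈ Set.Icc (0:ℝ) 1 := hsupp
  have h2 : u 0 + ∫ y in Set.Ioc (0:ℝ) 1, a y * μ.real (Set.Ici y) = 0 := by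
    refine Eq.trans ?_ hu0
    rw [integral_congr_ae (hae.mono h1), integral_add (integrable_const _)
      hint.integral_prod_left, integral_integral_swap hint]
    simp [integral_const_mul, auxF_int]
  intro x hx
  have i1 : Integrable (fun y => a y * auxF y x) (volume.restrict (Set.Ioc (0:ℝ) 1)) := by
    refine Integrable.of_bound (C := C * 1) ?_ (Filter.Eventually.of_forall fun p => ?_)
    · exact (hm.mul (auxF_meas.comp (measurable_id.prodMk measurable_const))).aestronglyMeasurable
    · rw [norm_mul]; exact mul_le_mul (hC _) (auxF_bd _ _) (norm_nonneg _) hC0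
  have i2 : Integrable (fun y => a y * μ.real (Set.Ici y))
      (volume.restrict (Set.Ioc (0:ℝ) 1)) := by
    refine Integrable.of_bound (C := C * 1) ?_ (Filter.Eventually.of_forall fun p => ?_)
    · exact (hm.mul (auxG_meas μ)).aestronglyMeasurable
    · rw [norm_mul]; exact mul_le_mul (hC _) (auxG_bd _ _) (norm_nonneg _) hC0
  simp only [mul_sub]
  rw [integral_sub i1 i2, h1 x hx]
  linarith

lemma aux_cov (μ : Measure ℝ) [IsProbabilityMeasure μ]
    (hsupp : μ (Set.Icc (0:ℝ) 1)ᶜ = 0) (y z : ℝ) (hy : y ∈ Set.Ioc (0:ℝ) 1)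
    (hz : z ∈ Set.Ioc (0:ℝ) 1) :
    ∫ x, (auxF y x - μ.real (Set.Ici y)) * (auxF z x - μ.real (Set.Ici z)) ∂μ
      = (μ (Set.Ico 0 (min y z))).toReal * (μ (Set.Icc (max y z) 1)).toReal := by
  have hae : ∀ᵐ x ∂μ, x ∈ Set.Icc (0:ℝ) 1 := hsupp
  have iF : ∀ y, Integrable (fun x => auxF y x) μ := fun y =>
    Integrable.of_bound (C := 1)
      (auxF_meas.comp (measurable_const.prodMk measurable_id)).aestronglyMeasurable
      (Filter.Eventually.of_forall fun p => auxF_bd _ _)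
  have e : ∀ x, (auxF y x - μ.real (Set.Ici y)) * (auxF z x - μ.real (Set.Ici z))
      = auxF (max y z) x - μ.real (Set.Ici z) * auxF y x - μ.real (Set.Ici y) * auxF z x
        + μ.real (Set.Ici y) * μ.real (Set.Ici z) := by
    intro x
    have : auxF (max y z) x = auxF y x * auxF z x := by
      simp only [auxF, Set.indicator_apply, Set.mem_Ici, max_le_iff]
      split_ifs <;> simp_all
    rw [this]; ring
  simp_rw [e]
  have i0 := iF (max y z)
  have i1 := (iF y).const_mul (μ.real (Set.Ici z))
  have i2 := (iF z).const_mul (μ.real (Set.Ici y))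
  have i3 : Integrable (fun x => auxF (max y z) x - μ.real (Set.Ici z) * auxF y x) μ := i0.sub i1
  have i4 : Integrable (fun x => auxF (max y z) x - μ.real (Set.Ici z) * auxF y x
      - μ.real (Set.Ici y) * auxF z x) μ := i3.sub i2
  rw [integral_add i4 (integrable_const _), integral_sub i3 i2, integral_sub i0 i1,
    integral_const_mul, integral_const_mul, auxF_int, auxF_int, auxF_int, integral_const,
    probReal_univ, one_smul]
  have e1 : (μ (Set.Icc (max y z) 1)).toReal = μ.real (Set.Ici (max y z)) := by
    rw [Measure.real]
    congr 1
    refine measure_congr ?_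
    filter_upwards [hae] with x hx
    exact propext ⟨fun h => h.1, fun h => ⟨h, hx.2⟩⟩
  have e2 : (μ (Set.Ico 0 (min y z))).toReal = 1 - μ.real (Set.Ici (min y z)) := by
    rw [← probReal_compl_eq_one_sub measurableSet_Ici, Measure.real]
    congr 1
    refine measure_congr ?_
    filter_upwards [hae] with x hx
    exact propext ⟨fun h => not_le.2 h.2, fun h => ⟨hx.1, not_le.1 h⟩⟩
  rw [e1, e2]
  rcases le_total y z with h | h <;> simp [h] <;> ring

/-- For a Borel probability measure `μ` on `[0,1]` and `C¹` functions `u, v` with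
`∫ u dμ = ∫ v dμ = 0`:
`∫ u v dμ = ∫₀¹∫₀¹ u'(y) v'(z) μ([0,min(y,z))) μ([max(y,z),1]) dy dz`. -/
theorem statement5 (μ : Measure ℝ) [IsProbabilityMeasure μ]
    (hsupp : μ (Set.Icc (0:ℝ) 1)ᶜ = 0)
    (u u' v v' : ℝ → ℝ)
    (hu : ∀ x ∈ Set.Icc (0:ℝ) 1, HasDerivAt u (u' x) x)
    (hu' : ContinuousOn u' (Set.Icc (0:ℝ) 1))
    (hv : ∀ x ∈ Set.Icc (0:ℝ) 1, HasDerivAt v (v' x) x)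
    (hv' : ContinuousOn v' (Set.Icc (0:ℝ) 1))
    (hu0 : ∫ x, u x ∂μ = 0) (hv0 : ∫ x, v x ∂μ = 0) :
    ∫ x, u x * v x ∂μ
      = ∫ y in (0:ℝ)..1, ∫ z in (0:ℝ)..1,
          u' y * v' z * (μ (Set.Ico 0 (min y z))).toReal
            * (μ (Set.Icc (max y z) 1)).toReal := by
  have hae : ∀ᵐ x ∂μ, x ∈ Set.Icc (0:ℝ) 1 := hsupp
  have ru := aux_rep μ hsupp u u' hu hu' hu0
  have rv := aux_rep μ hsupp v v' hv hv' hv0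
  obtain ⟨ma, A, hA⟩ := aux_ind u' hu'
  obtain ⟨mb, B, hB⟩ := aux_ind v' hv'
  obtain ⟨mw, W, hW⟩ := aux_ind v (fun x hx => (hv x hx).continuousAt.continuousWithinAt)
  have hua : ∀ y ∈ Set.Ioc (0:ℝ) 1, (Set.Icc (0:ℝ) 1).indicator u' y = u' y :=
    fun y hy => Set.indicator_of_mem (s := Set.Icc (0:ℝ) 1) ⟨hy.1.le, hy.2⟩ _
  have hvb : ∀ y ∈ Set.Ioc (0:ℝ) 1, (Set.Icc (0:ℝ) 1).indicator v' y = v' y :=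
    fun y hy => Set.indicator_of_mem (s := Set.Icc (0:ℝ) 1) ⟨hy.1.le, hy.2⟩ _
  have hvw : ∀ y ∈ Set.Icc (0:ℝ) 1, (Set.Icc (0:ℝ) 1).indicator v y = v y :=
    fun y hy => Set.indicator_of_mem hy _
  set a := (Set.Icc (0:ℝ) 1).indicator u'
  set b := (Set.Icc (0:ℝ) 1).indicator v'
  set w := (Set.Icc (0:ℝ) 1).indicator v
  have hA0 : 0 ≤ A := (norm_nonneg _).trans (hA 0)
  have hB0 : 0 ≤ B := (norm_nonneg _).trans (hB 0)
  have hW0 : 0 ≤ W := (norm_nonneg _).trans (hW 0)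
  set H : ℝ → ℝ → ℝ := fun y x => auxF y x - μ.real (Set.Ici y) with hH
  have mH : Measurable (fun p : ℝ × ℝ => H p.1 p.2) :=
    auxF_meas.sub ((auxG_meas μ).comp measurable_fst)
  have bH : ∀ y x, ‖H y x‖ ≤ 2 := fun y x =>
    (norm_sub_le _ _).trans (by linarith [auxF_bd y x, auxG_bd μ y])
  have s1 : ∫ x, u x * v x ∂μ = ∫ x, (∫ y in Set.Ioc (0:ℝ) 1, a y * H y x * w x) ∂μ := by
    refine integral_congr_ae (hae.mono fun x hx => ?_)
    simp only
    rw [integral_mul_const, ← ru x hx, hvw x hx]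
  rw [s1, integral_integral_swap, intervalIntegral.integral_of_le zero_le_one]
  · refine setIntegral_congr_fun measurableSet_Ioc fun y hy => ?_
    have s2 : ∫ x, a y * H y x * w x ∂μ
        = ∫ x, (∫ z in Set.Ioc (0:ℝ) 1, a y * H y x * (b z * H z x)) ∂μ := by
      refine integral_congr_ae (hae.mono fun x hx => ?_)
      simp only
      rw [integral_const_mul, ← rv x hx, hvw x hx]
    rw [s2, integral_integral_swap, intervalIntegral.integral_of_le zero_le_one]
    · refine setIntegral_congr_fun measurableSet_Ioc fun z hz => ?_
      rw [mul_assoc, ← aux_cov μ hsupp y z hy hz, ← integral_const_mul, hua y hy, hvb z hz]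
      refine integral_congr_ae (Filter.Eventually.of_forall fun x => ?_)
      simp only [hH]; ring
    · refine Integrable.of_bound (C := A * 2 * (B * 2)) ?_ (Filter.Eventually.of_forall fun p => ?_)
      · exact ((measurable_const.mul (mH.comp (measurable_const.prodMk measurable_fst))).mul
          ((mb.comp measurable_snd).mul (mH.comp measurable_swap))).aestronglyMeasurable
      · simp only [Function.uncurry, norm_mul]
        gcongr <;> first | exact hA _ | exact hB _ | exact bH _ _
  · refine Integrable.of_bound (C := A * 2 * W) ?_ (Filter.Eventually.of_forall fun p => ?_)
    · exact (((ma.comp measurable_snd).mul (mH.comp measurable_swap)).mul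
        (mw.comp measurable_fst)).aestronglyMeasurable
    · simp only [Function.uncurry, norm_mul]
      gcongr <;> first | exact hA _ | exact hW _ | exact bH _ _
end

section
/- If moreover 0 < μ([0,x]) < 1 for every x ∈ (0,1), and u'(x) > 0 and v'(x) > 0 for all x ∈ (0,1), then ∫₀¹ u(x) v(x) dμ(x) > 0. -/
open MeasureTheory

/-- For a Borel probability measure `μ` on `[0,1]` with `0 < μ([0,x]) < 1` for `x ∈ (0,1)`,
and `C¹` functions `u, v` with `∫ u dμ = ∫ v dμ = 0` and `u' > 0`, `v' > 0` on `(0,1)`,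
one has `∫ u v dμ > 0`. -/
theorem statement6 (μ : Measure ℝ) [IsProbabilityMeasure μ]
    (hsupp : μ (Set.Icc (0:ℝ) 1)ᶜ = 0)
    (u u' v v' : ℝ → ℝ)
    (hu : ∀ x ∈ Set.Icc (0:ℝ) 1, HasDerivAt u (u' x) x)
    (hu' : ContinuousOn u' (Set.Icc (0:ℝ) 1))
    (hv : ∀ x ∈ Set.Icc (0:ℝ) 1, HasDerivAt v (v' x) x)
    (hv' : ContinuousOn v' (Set.Icc (0:ℝ) 1))
    (hu0 : ∫ x, u x ∂μ = 0) (hv0 : ∫ x, v x ∂μ = 0)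
    (hμpos : ∀ x ∈ Set.Ioo (0:ℝ) 1, 0 < μ (Set.Icc 0 x) ∧ μ (Set.Icc 0 x) < 1)
    (hupos : ∀ x ∈ Set.Ioo (0:ℝ) 1, 0 < u' x)
    (hvpos : ∀ x ∈ Set.Ioo (0:ℝ) 1, 0 < v' x) :
    0 < ∫ x, u x * v x ∂μ := by
  have hae : ∀ᵐ x ∂μ, x ∈ Set.Icc (0:ℝ) 1 := hsupp
  have hres : μ.restrict (Set.Icc (0:ℝ) 1) = μ := Measure.restrict_eq_self_of_ae_mem hae
  have hint : ∀ f : ℝ → ℝ, ContinuousOn f (Set.Icc (0:ℝ) 1) → Integrable f μ := by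
    intro f hf
    have h := hf.integrableOn_compact (μ := μ) isCompact_Icc
    rwa [IntegrableOn, hres] at h
  have hcu : ContinuousOn u (Set.Icc (0:ℝ) 1) :=
    fun x hx => (hu x hx).continuousAt.continuousWithinAt
  have hcv : ContinuousOn v (Set.Icc (0:ℝ) 1) :=
    fun x hx => (hv x hx).continuousAt.continuousWithinAt
  have hmu : StrictMonoOn u (Set.Icc (0:ℝ) 1) := by
    apply strictMonoOn_of_deriv_pos (convex_Icc 0 1) hcu
    intro x hx
    rw [interior_Icc] at hx
    rw [(hu x (Set.Ioo_subset_Icc_self hx)).deriv]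
    exact hupos x hx
  have hmv : StrictMonoOn v (Set.Icc (0:ℝ) 1) := by
    apply strictMonoOn_of_deriv_pos (convex_Icc 0 1) hcv
    intro x hx
    rw [interior_Icc] at hx
    rw [(hv x (Set.Ioo_subset_Icc_self hx)).deriv]
    exact hvpos x hx
  have m0 : (0:ℝ) ∈ Set.Icc (0:ℝ) 1 := by simp
  have m1 : (1:ℝ) ∈ Set.Icc (0:ℝ) 1 := by simp
  have h0 : u 0 ≤ 0 := by
    have h : ∫ _, u 0 ∂μ ≤ ∫ x, u x ∂μ := by
      apply integral_mono_ae (integrable_const _) (hint u hcu)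
      filter_upwards [hae] with x hx
      exact hmu.monotoneOn m0 hx hx.1
    simpa [hu0] using h
  have h1 : 0 ≤ u 1 := by
    have h : ∫ x, u x ∂μ ≤ ∫ _, u 1 ∂μ := by
      apply integral_mono_ae (hint u hcu) (integrable_const _)
      filter_upwards [hae] with x hx
      exact hmu.monotoneOn hx m1 hx.2
    simpa [hu0] using h
  obtain ⟨c, hc, huc⟩ := intermediate_value_Icc zero_le_one hcu ⟨h0, h1⟩
  have hpos : ∀ x ∈ Set.Icc (0:ℝ) 1, x ≠ c → 0 < u x * (v x - v c) := by
    intro x hx hne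
    rcases lt_or_gt_of_ne hne with h | h
    · have a := hmu hx hc h
      have b := hmv hx hc h
      exact mul_pos_of_neg_of_neg (by linarith) (by linarith)
    · have a := hmu hc hx h
      have b := hmv hc hx h
      exact mul_pos (by linarith) (by linarith)
  have hnn : 0 ≤ᵐ[μ] fun x => u x * (v x - v c) := by
    filter_upwards [hae] with x hx
    by_cases h : x = c
    · simp [h]
    · exact (hpos x hx h).le
  have hi : Integrable (fun x => u x * (v x - v c)) μ :=
    hint _ (hcu.mul (hcv.sub continuousOn_const))
  have heq : ∫ x, u x * v x ∂μ = ∫ x, u x * (v x - v c) ∂μ := by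
    simp_rw [mul_sub]
    rw [integral_sub (hint (fun x => u x * v x) (hcu.mul hcv)) ((hint u hcu).mul_const _), integral_mul_const, hu0]
    simp
  rw [heq]
  refine lt_of_le_of_ne (integral_nonneg_of_ae hnn) fun hz => ?_
  have hz' := (integral_eq_zero_iff_of_nonneg_ae hnn hi).1 hz.symm
  have hcae : ∀ᵐ x ∂μ, x = c := by
    filter_upwards [hz', hae] with x hx hx'
    by_contra hne
    exact (hpos x hx' hne).ne' hx
  rcases hc.1.eq_or_lt with h | h
  · have hh := (hμpos (1/2) (by norm_num)).2
    refine hh.ne ((mem_ae_iff_prob_eq_one measurableSet_Icc).1 ?_)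
    filter_upwards [hcae] with x hx
    rw [hx, ← h]; norm_num
  · have hh := (hμpos (c/2) ⟨by linarith, by linarith [hc.2]⟩).1
    refine hh.ne' (measure_mono_null (t := {x | ¬ x = c}) ?_ hcae)
    intro x hx hxc
    have := hx.2
    linarith
end

section
/- Then (d²/(2D)) · ( ∫₀¹ u(x)² μ(x) dx + ∫₀¹ u'(x)² μ(x) dx ) ≤ ∫₀¹ u'(x)² σ²(x) μ(x) dx ≤ D · ( ∫₀¹ u(x)² μ(x) dx + ∫₀¹ u'(x)² μ(x) dx ). -/
/-- Coercivity bounds: if `d ≤ σ² ≤ D`, `d ≤ μ ≤ D` on `[0,1]` and `u` is `C¹` with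
`∫₀¹ u μ = 0`, then
`(d²/(2D)) (∫ u² μ + ∫ u'² μ) ≤ ∫ u'² σ² μ ≤ D (∫ u² μ + ∫ u'² μ)`. -/
theorem statement8 (d D : ℝ) (hd : 0 < d) (hdD : d < D)
    (σ μ : ℝ → ℝ) (hσm : Measurable σ) (hμm : Measurable μ)
    (hσ : ∀ x ∈ Set.Icc (0:ℝ) 1, d ≤ (σ x)^2 ∧ (σ x)^2 ≤ D)
    (hμ : ∀ x ∈ Set.Icc (0:ℝ) 1, d ≤ μ x ∧ μ x ≤ D)
    (u u' : ℝ → ℝ)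
    (hderiv : ∀ x ∈ Set.Icc (0:ℝ) 1, HasDerivAt u (u' x) x)
    (hcont : ContinuousOn u' (Set.Icc (0:ℝ) 1))
    (hmean : (∫ x in (0:ℝ)..1, u x * μ x) = 0) :
    (d^2/(2*D)) * ((∫ x in (0:ℝ)..1, (u x)^2 * μ x) + ∫ x in (0:ℝ)..1, (u' x)^2 * μ x)
        ≤ ∫ x in (0:ℝ)..1, (u' x)^2 * (σ x)^2 * μ x ∧
      (∫ x in (0:ℝ)..1, (u' x)^2 * (σ x)^2 * μ x)
        ≤ D * ((∫ x in (0:ℝ)..1, (u x)^2 * μ x) + ∫ x in (0:ℝ)..1, (u' x)^2 * μ x) := by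
  have hD : 0 < D := hd.trans hdD
  have h01 : (0:ℝ) ≤ 1 := zero_le_one
  have hcu : ContinuousOn u (Set.Icc (0:ℝ) 1) := fun x hx =>
    (hderiv x hx).continuousAt.continuousWithinAt
  have bdd : ∀ f : ℝ → ℝ, Measurable f → (∃ C : ℝ, ∀ x ∈ Set.Icc (0:ℝ) 1, |f x| ≤ C) →
      IntervalIntegrable f MeasureTheory.volume 0 1 := by
    rintro f hf ⟨C, hC⟩
    rw [intervalIntegrable_iff_integrableOn_Icc_of_le h01]
    refine MeasureTheory.Measure.integrableOn_of_bounded (M := C) (by simp)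
      hf.aestronglyMeasurable ?_
    rw [MeasureTheory.ae_restrict_iff' measurableSet_Icc]
    exact Filter.Eventually.of_forall hC
  have iμ : IntervalIntegrable μ MeasureTheory.volume 0 1 := by
    refine bdd _ hμm ⟨D, fun x hx => ?_⟩
    have := hμ x hx
    rw [abs_of_pos (by linarith)]; exact this.2
  have iσμ : IntervalIntegrable (fun x => (σ x)^2 * μ x) MeasureTheory.volume 0 1 := by
    refine bdd _ ((hσm.pow_const 2).mul hμm) ⟨D * D, fun x hx => ?_⟩
    have h1 := hμ x hx
    have h2 := hσ x hx
    have h3 : 0 < μ x := by linarith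
    rw [abs_of_nonneg (by positivity)]
    exact mul_le_mul h2.2 h1.2 h3.le hD.le
  have key : ∀ f g : ℝ → ℝ, ContinuousOn f (Set.Icc (0:ℝ) 1) →
      IntervalIntegrable g MeasureTheory.volume 0 1 →
      IntervalIntegrable (fun x => f x * g x) MeasureTheory.volume 0 1 := by
    intro f g hf hg
    exact hg.continuousOn_mul (by rwa [Set.uIcc_of_le h01])
  have iA := key (fun x => (u x)^2) μ (hcu.pow 2) iμ
  have iU := key u μ hcu iμ
  have iB := key (fun x => (u' x)^2) μ (hcont.pow 2) iμ
  have iC : IntervalIntegrable (fun x => (u' x)^2 * (σ x)^2 * μ x) MeasureTheory.volume 0 1 := by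
    simpa only [mul_assoc] using key (fun x => (u' x)^2) _ (hcont.pow 2) iσμ
  have iE : IntervalIntegrable (fun x => (u' x)^2) MeasureTheory.volume 0 1 :=
    ContinuousOn.intervalIntegrable (by rw [Set.uIcc_of_le h01]; exact hcont.pow 2)
  have iu' : IntervalIntegrable u' MeasureTheory.volume 0 1 :=
    ContinuousOn.intervalIntegrable (by rwa [Set.uIcc_of_le h01])
  -- pointwise bound
  have hpt : ∀ x ∈ Set.Icc (0:ℝ) 1, (u x - u 0)^2 ≤ ∫ y in (0:ℝ)..1, (u' y)^2 := by
    intro x hx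
    have hsub : Set.uIcc (0:ℝ) x ⊆ Set.uIcc (0:ℝ) 1 := by
      rw [Set.uIcc_of_le h01, Set.uIcc_of_le hx.1]; exact Set.Icc_subset_Icc_right hx.2
    have iE0 := iE.mono_set hsub
    have iu0 := iu'.mono_set hsub
    have hF : ∫ y in (0:ℝ)..x, u' y = u x - u 0 := by
      apply intervalIntegral.integral_eq_sub_of_hasDerivAt _ iu0
      intro y hy
      apply hderiv
      have := hsub hy
      rwa [Set.uIcc_of_le h01] at this
    have hmono : ∫ y in (0:ℝ)..x, (u' y)^2 ≤ ∫ y in (0:ℝ)..1, (u' y)^2 :=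
      intervalIntegral.integral_mono_interval le_rfl hx.1 hx.2
        (Filter.Eventually.of_forall fun y => sq_nonneg _) iE
    set t := u x - u 0 with ht
    have h1 : ∫ y in (0:ℝ)..x, (2 * t * u' y - t^2) ≤ ∫ y in (0:ℝ)..x, (u' y)^2 := by
      apply intervalIntegral.integral_mono_on hx.1 ((iu0.const_mul _).sub (by simp)) iE0
      intro y _
      nlinarith [sq_nonneg (u' y - t)]
    rw [intervalIntegral.integral_sub (iu0.const_mul _) (by simp),
      intervalIntegral.integral_const_mul, hF, intervalIntegral.integral_const, smul_eq_mul] at h1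
    nlinarith [mul_nonneg (sq_nonneg t) (sub_nonneg.2 hx.2)]
  set E := ∫ y in (0:ℝ)..1, (u' y)^2 with hE
  set A := ∫ x in (0:ℝ)..1, (u x)^2 * μ x with hA
  set B := ∫ x in (0:ℝ)..1, (u' x)^2 * μ x with hB
  set C := ∫ x in (0:ℝ)..1, (u' x)^2 * (σ x)^2 * μ x with hC
  have hE0 : 0 ≤ E := intervalIntegral.integral_nonneg h01 fun x _ => sq_nonneg _
  have hA0 : 0 ≤ A := intervalIntegral.integral_nonneg h01 fun x hx =>
    mul_nonneg (sq_nonneg _) (hd.le.trans (hμ x hx).1)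
  have hB0 : 0 ≤ B := intervalIntegral.integral_nonneg h01 fun x hx =>
    mul_nonneg (sq_nonneg _) (hd.le.trans (hμ x hx).1)
  have hAE : A ≤ D * E := by
    have h1 : ∫ x in (0:ℝ)..1, ((u x)^2 * μ x - 2 * u 0 * (u x * μ x))
        ≤ ∫ x in (0:ℝ)..1, D * E := by
      apply intervalIntegral.integral_mono_on h01 (iA.sub (iU.const_mul _)) (by simp)
      intro x hx
      have h2 := hμ x hx
      have h3 : 0 ≤ μ x := by linarith
      have h4 := mul_le_mul h2.2 (hpt x hx) (sq_nonneg _) hD.le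
      nlinarith [mul_nonneg h3 (sq_nonneg (u 0))]
    rw [intervalIntegral.integral_sub iA (iU.const_mul _),
      intervalIntegral.integral_const_mul, hmean] at h1
    simpa using h1
  have hEB : d * E ≤ B := by
    rw [hE, ← intervalIntegral.integral_const_mul]
    apply intervalIntegral.integral_mono_on h01 (iE.const_mul _) iB
    intro x hx
    nlinarith [mul_le_mul_of_nonneg_left (hμ x hx).1 (sq_nonneg (u' x))]
  have hBC : d * B ≤ C := by
    rw [hB, ← intervalIntegral.integral_const_mul]
    apply intervalIntegral.integral_mono_on h01 (iB.const_mul _) iC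
    intro x hx
    have h3 : 0 ≤ (u' x)^2 * μ x := mul_nonneg (sq_nonneg _) (hd.le.trans (hμ x hx).1)
    nlinarith [mul_le_mul_of_nonneg_left (hσ x hx).1 h3]
  have hCB : C ≤ D * B := by
    rw [hB, ← intervalIntegral.integral_const_mul]
    apply intervalIntegral.integral_mono_on h01 iC (iB.const_mul _)
    intro x hx
    have h3 : 0 ≤ (u' x)^2 * μ x := mul_nonneg (sq_nonneg _) (hd.le.trans (hμ x hx).1)
    nlinarith [mul_le_mul_of_nonneg_left (hσ x hx).2 h3]
  refine ⟨?_, ?_⟩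
  · refine le_trans ?_ hBC
    rw [div_mul_eq_mul_div, div_le_iff₀ (by positivity)]
    have h1 : d * A ≤ D * B := by
      calc d * A ≤ d * (D * E) := mul_le_mul_of_nonneg_left hAE hd.le
        _ = D * (d * E) := by ring
        _ ≤ D * B := mul_le_mul_of_nonneg_left hEB hD.le
    have h2 : d * B ≤ D * B := mul_le_mul_of_nonneg_right hdD.le hB0
    nlinarith [mul_le_mul_of_nonneg_left h1 hd.le, mul_le_mul_of_nonneg_left h2 hd.le]
  · nlinarith [mul_nonneg hD.le hA0]
end

section
/- If w : [0,1] → ℝ is continuously differentiable, w ≠ 0, ∫₀¹ w(x) μ(x) dx = 0, and λ is a real number such that ∫₀¹ w'(x) v'(x) σ²(x) μ(x) dx = 2λ ∫₀¹ w(x) v(x) μ(x) dx for every continuously differentiable v : [0,1] → ℝ, then 2λ ≥ d²/D. -/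
theorem aux_int (f : ℝ → ℝ) (C : ℝ) (hf : Measurable f)
    (hb : ∀ x ∈ Set.Icc (0:ℝ) 1, |f x| ≤ C) : IntervalIntegrable f MeasureTheory.volume 0 1 := by
  rw [intervalIntegrable_iff_integrableOn_Icc_of_le zero_le_one]
  refine MeasureTheory.IntegrableOn.of_bound (C := C) (by simp) hf.aestronglyMeasurable ?_
  rw [MeasureTheory.ae_restrict_iff' measurableSet_Icc]
  exact Filter.Eventually.of_forall fun x hx => hb x hx

theorem aux_cs (w w' : ℝ → ℝ) (hw : IsC1On01 w w') (x : ℝ) (hx : x ∈ Set.Icc (0:ℝ) 1) :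
    (w x - w 0)^2 ≤ ∫ t in (0:ℝ)..1, (w' t)^2 := by
  obtain ⟨h1, h2⟩ := hw
  obtain ⟨hx0, hx1⟩ := hx
  have hc : ContinuousOn w' (Set.uIcc 0 x) := by
    rw [Set.uIcc_of_le hx0]; exact h2.mono (Set.Icc_subset_Icc_right hx1)
  have hc2 : ContinuousOn w' (Set.uIcc x 1) := by
    rw [Set.uIcc_of_le hx1]; exact h2.mono (Set.Icc_subset_Icc_left hx0)
  have hi : IntervalIntegrable w' MeasureTheory.volume 0 x := hc.intervalIntegrable
  have hi2 : IntervalIntegrable (fun t => (w' t)^2) MeasureTheory.volume 0 x :=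
    (hc.pow 2).intervalIntegrable
  have hi3 : IntervalIntegrable (fun t => (w' t)^2) MeasureTheory.volume x 1 :=
    (hc2.pow 2).intervalIntegrable
  have hftc : ∫ t in (0:ℝ)..x, w' t = w x - w 0 := by
    apply intervalIntegral.integral_eq_sub_of_hasDerivAt _ hi
    intro t ht
    rw [Set.uIcc_of_le hx0] at ht
    exact h1 t ⟨ht.1, ht.2.trans hx1⟩
  set a := w x - w 0 with ha
  have e : ∫ t in (0:ℝ)..x, (w' t - a)^2 = (∫ t in (0:ℝ)..x, (w' t)^2) - 2*a*a + a^2*x := by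
    have : (fun t => (w' t - a)^2) = fun t => ((w' t)^2 - (2*a) * w' t) + a^2 := by
      funext t; ring
    rw [this, intervalIntegral.integral_add (hi2.sub (hi.const_mul _)) (by simp),
      intervalIntegral.integral_sub hi2 (hi.const_mul _), intervalIntegral.integral_const_mul, hftc]
    simp; ring
  have n1 : 0 ≤ ∫ t in (0:ℝ)..x, (w' t - a)^2 :=
    intervalIntegral.integral_nonneg hx0 fun t _ => sq_nonneg _
  have n2 : 0 ≤ ∫ t in x..1, (w' t)^2 :=
    intervalIntegral.integral_nonneg hx1 fun t _ => sq_nonneg _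
  rw [← intervalIntegral.integral_add_adjacent_intervals hi2 hi3]
  nlinarith [sq_nonneg a]

/-- If `d ≤ σ² ≤ D`, `d ≤ μ ≤ D` on `[0,1]` and `(λ, w)` is a nontrivial solution of the
weak Neumann eigenproblem with `∫₀¹ w μ = 0`, then `2λ ≥ d²/D`. -/
theorem statement9 (d D : ℝ) (hd : 0 < d) (hdD : d < D)
    (σ μ : ℝ → ℝ) (hσm : Measurable σ) (hμm : Measurable μ)
    (hσ : ∀ x ∈ Set.Icc (0:ℝ) 1, d ≤ (σ x)^2 ∧ (σ x)^2 ≤ D)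
    (hμ : ∀ x ∈ Set.Icc (0:ℝ) 1, d ≤ μ x ∧ μ x ≤ D)
    (w w' : ℝ → ℝ) (hw : IsC1On01 w w')
    (hw0 : ∃ x ∈ Set.Icc (0:ℝ) 1, w x ≠ 0)
    (hmean : (∫ x in (0:ℝ)..1, w x * μ x) = 0)
    (lam : ℝ)
    (heig : ∀ v v' : ℝ → ℝ, IsC1On01 v v' →
      ∫ x in (0:ℝ)..1, w' x * v' x * (σ x)^2 * μ x
        = 2 * lam * ∫ x in (0:ℝ)..1, w x * v x * μ x) :
    2 * lam ≥ d^2 / D := by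
  have hD : 0 < D := hd.trans hdD
  have key := heig w w' hw
  have hcs := aux_cs w w' hw
  obtain ⟨h1, h2⟩ := hw
  have hwc : ContinuousOn w (Set.Icc 0 1) := fun x hx => (h1 x hx).continuousAt.continuousWithinAt
  have hu : Set.uIcc (0:ℝ) 1 = Set.Icc 0 1 := Set.uIcc_of_le zero_le_one
  have iμ : IntervalIntegrable μ MeasureTheory.volume 0 1 := by
    refine aux_int μ D hμm fun x hx => ?_
    have := hμ x hx
    rw [abs_of_pos (by linarith)]; exact this.2
  have iσμ : IntervalIntegrable (fun x => (σ x)^2 * μ x) MeasureTheory.volume 0 1 := by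
    refine aux_int _ (D*D) ((hσm.pow_const 2).mul hμm) fun x hx => ?_
    have a := hμ x hx
    have b := hσ x hx
    rw [abs_of_nonneg (mul_nonneg (sq_nonneg _) (by linarith))]
    exact mul_le_mul b.2 a.2 (by linarith) hD.le
  have i1 : IntervalIntegrable (fun x => w x * μ x) MeasureTheory.volume 0 1 :=
    iμ.continuousOn_mul (hu ▸ hwc)
  have i2 : IntervalIntegrable (fun x => w x * w x * μ x) MeasureTheory.volume 0 1 :=
    iμ.continuousOn_mul (hu ▸ hwc.mul hwc)
  have i3 : IntervalIntegrable (fun x => w' x * w' x * (σ x)^2 * μ x) MeasureTheory.volume 0 1 := by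
    have : IntervalIntegrable (fun x => w' x * w' x * ((σ x)^2 * μ x)) MeasureTheory.volume 0 1 :=
      iσμ.continuousOn_mul (hu ▸ h2.mul h2)
    simpa only [mul_assoc] using this
  have i4 : IntervalIntegrable (fun x => (w' x)^2) MeasureTheory.volume 0 1 :=
    (hu ▸ h2.pow 2 : ContinuousOn (fun x => (w' x)^2) (Set.uIcc 0 1)).intervalIntegrable
  have i5 : IntervalIntegrable (fun x => (w x)^2) MeasureTheory.volume 0 1 :=
    (hu ▸ hwc.pow 2 : ContinuousOn (fun x => (w x)^2) (Set.uIcc 0 1)).intervalIntegrable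
  set E := ∫ t in (0:ℝ)..1, (w' t)^2 with hE
  set B := ∫ x in (0:ℝ)..1, w x * w x * μ x with hB
  have k1 : d^2 * E ≤ 2 * lam * B := by
    rw [← key, hE, ← intervalIntegral.integral_const_mul]
    refine intervalIntegral.integral_mono_on zero_le_one (i4.const_mul _) i3 fun x hx => ?_
    have a := hμ x hx
    have b := hσ x hx
    have : d * d ≤ (σ x)^2 * μ x := mul_le_mul b.1 a.1 hd.le (sq_nonneg _)
    nlinarith [mul_le_mul_of_nonneg_left this (sq_nonneg (w' x))]
  have k2 : B ≤ D * E := by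
    set c := w 0
    have i6 := (i2.sub (i1.const_mul (2*c))).add (iμ.const_mul (c^2))
    have e : ∫ x in (0:ℝ)..1, ((w x * w x * μ x - 2*c*(w x * μ x)) + c^2 * μ x)
        = B + c^2 * ∫ x in (0:ℝ)..1, μ x := by
      rw [intervalIntegral.integral_add (i2.sub (i1.const_mul (2*c))) (iμ.const_mul (c^2)),
        intervalIntegral.integral_sub i2 (i1.const_mul _), intervalIntegral.integral_const_mul,
        intervalIntegral.integral_const_mul, hmean]
      simp [hB]
    have l : ∫ x in (0:ℝ)..1, ((w x * w x * μ x - 2*c*(w x * μ x)) + c^2 * μ x)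
        ≤ ∫ x in (0:ℝ)..1, D * E := by
      refine intervalIntegral.integral_mono_on zero_le_one i6 (by simp) fun x hx => ?_
      have a := hμ x hx
      have := mul_le_mul a.2 (hcs x hx) (sq_nonneg _) hD.le
      nlinarith
    have n : 0 ≤ ∫ x in (0:ℝ)..1, μ x :=
      intervalIntegral.integral_nonneg zero_le_one fun x hx => hd.le.trans (hμ x hx).1
    rw [e] at l
    simp at l
    nlinarith [mul_nonneg (sq_nonneg c) n]
  have k3 : 0 < B := by
    have p : 0 < ∫ x in (0:ℝ)..1, (w x)^2 := by
      obtain ⟨x, hx, hne⟩ := hw0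
      exact intervalIntegral.integral_pos zero_lt_one (hwc.pow 2) (fun _ _ => sq_nonneg _)
        ⟨x, hx, by positivity⟩
    have q : d * ∫ x in (0:ℝ)..1, (w x)^2 ≤ B := by
      rw [← intervalIntegral.integral_const_mul]
      refine intervalIntegral.integral_mono_on zero_le_one (i5.const_mul _) i2 fun x hx => ?_
      nlinarith [mul_le_mul_of_nonneg_left (hμ x hx).1 (sq_nonneg (w x))]
    exact (mul_pos hd p).trans_le q
  have k4 : 0 < E := by
    by_contra h
    nlinarith
  have k5 : 0 < 2 * lam := by
    by_contra h
    nlinarith [mul_pos (pow_pos hd 2) k4]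
  rw [ge_iff_le, div_le_iff₀ hD]
  have := mul_le_mul_of_nonneg_left k2 k5.le
  refine le_of_mul_le_mul_right ?_ k4
  linarith
end

section
/- For every function u in the linear span of {1, cos(πx), cos(2πx)} on [0,1] one has ∫₀¹ u'(x)² σ²(x) μ(x) dx ≤ (4π² D² / d) ∫₀¹ u(x)² μ(x) dx. (This three-dimensional test space yields the uniform upper bound 2λ₂ ≤ 4π² D²/d for the second variational Neumann eigenvalue of the form u ↦ ∫ u'² σ² μ.) -/
open MeasureTheory in
theorem aux_int_s10 (f g : ℝ → ℝ) (hf : Measurable f) (hg : Continuous g)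
    (h0 : ∀ x ∈ Set.Icc (0:ℝ) 1, 0 ≤ f x)
    (h : ∀ x ∈ Set.Icc (0:ℝ) 1, f x ≤ g x) : IntervalIntegrable f volume 0 1 := by
  refine (hg.intervalIntegrable (μ := volume) 0 1).mono_fun hf.aestronglyMeasurable ?_
  refine (ae_restrict_iff' measurableSet_uIoc).2 (Filter.Eventually.of_forall ?_)
  intro x hx
  rw [Set.uIoc_of_le zero_le_one] at hx
  have hx' := Set.Ioc_subset_Icc_self hx
  simp only [Real.norm_eq_abs]
  exact abs_le_abs_of_nonneg (h0 x hx') (h x hx')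

theorem aux_val (a b c : ℝ) :
    ∫ x in (0:ℝ)..1, (4 * Real.pi^2 *
      (a + b * Real.cos (Real.pi * x) + c * Real.cos (2 * Real.pi * x))^2
      - (-(b * Real.pi * Real.sin (Real.pi * x))
      - 2 * c * Real.pi * Real.sin (2 * Real.pi * x))^2)
      = Real.pi^2 * (4 * a^2 + 3 * b^2 / 2) := by
  have hs : ∀ (k x : ℝ), HasDerivAt (fun x => Real.sin (k * x)) (Real.cos (k * x) * k) x := by
    intro k x
    have h := ((hasDerivAt_id x).const_mul k).sin
    simpa using h
  rw [intervalIntegral.integral_eq_sub_of_hasDerivAt (f := fun x =>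
    Real.pi^2 * (4 * a^2 + 3 * b^2 / 2) * x
    + Real.pi * (8*a*b + 2*b*c) * Real.sin (Real.pi * x)
    + Real.pi * ((5*b^2/2 + 8*a*c)/2) * Real.sin (2 * Real.pi * x)
    + Real.pi * (2*b*c) * Real.sin (3 * Real.pi * x)
    + Real.pi * c^2 * Real.sin (4 * Real.pi * x))]
  · have h2 : Real.sin (2 * Real.pi) = 0 := Real.sin_two_pi
    have h3 : Real.sin (3 * Real.pi) = 0 := by exact_mod_cast Real.sin_nat_mul_pi 3
    have h4 : Real.sin (4 * Real.pi) = 0 := by exact_mod_cast Real.sin_nat_mul_pi 4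
    simp [h3, h4]
  · intro x _
    have h := (((((hasDerivAt_id x).const_mul (Real.pi^2 * (4 * a^2 + 3 * b^2 / 2))).add
      ((hs Real.pi x).const_mul (Real.pi * (8*a*b + 2*b*c)))).add
      ((hs (2*Real.pi) x).const_mul (Real.pi * ((5*b^2/2 + 8*a*c)/2)))).add
      ((hs (3*Real.pi) x).const_mul (Real.pi * (2*b*c)))).add
      ((hs (4*Real.pi) x).const_mul (Real.pi * c^2))
    refine HasDerivAt.congr_deriv h (Eq.symm ?_)
    have e2 : 2 * Real.pi * x = 2 * (Real.pi * x) := by ring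
    have e3 : 3 * Real.pi * x = 3 * (Real.pi * x) := by ring
    have e4 : 4 * Real.pi * x = 2 * (2 * (Real.pi * x)) := by ring
    rw [e2, e3, e4, Real.cos_three_mul, Real.cos_two_mul (2 * (Real.pi * x)), Real.cos_two_mul,
      Real.sin_two_mul]
    have hp : Real.sin (Real.pi * x)^2 = 1 - Real.cos (Real.pi * x)^2 := by
      rw [← Real.sin_sq_add_cos_sq (Real.pi * x)]; ring
    generalize Real.sin (Real.pi * x) = s at *
    generalize Real.cos (Real.pi * x) = k at *
    linear_combination (-(Real.pi^2) * (b + 4 * c * k)^2) * hp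
  · apply Continuous.intervalIntegrable
    fun_prop

/-- For every `u` in the span of `{1, cos(πx), cos(2πx)}` on `[0,1]` one has
`∫₀¹ u'² σ² μ ≤ (4π² D²/d) ∫₀¹ u² μ`, where `σ² ≤ D`, `d ≤ μ ≤ D`. -/
theorem statement10 (d D : ℝ) (hd : 0 < d) (hdD : d ≤ D)
    (σ μ : ℝ → ℝ) (hσm : Measurable σ) (hμm : Measurable μ)
    (hσD : ∀ x ∈ Set.Icc (0:ℝ) 1, (σ x)^2 ≤ D)
    (hμD : ∀ x ∈ Set.Icc (0:ℝ) 1, μ x ≤ D)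
    (hμd : ∀ x ∈ Set.Icc (0:ℝ) 1, d ≤ μ x)
    (a b c : ℝ) (u u' : ℝ → ℝ)
    (hu : u = fun x => a + b * Real.cos (Real.pi * x) + c * Real.cos (2 * Real.pi * x))
    (hu' : u' = fun x => -(b * Real.pi * Real.sin (Real.pi * x))
      - 2 * c * Real.pi * Real.sin (2 * Real.pi * x)) :
    ∫ x in (0:ℝ)..1, (u' x)^2 * (σ x)^2 * μ x
      ≤ (4 * Real.pi^2 * D^2 / d) * ∫ x in (0:ℝ)..1, (u x)^2 * μ x := by
  have hD : 0 < D := hd.trans_le hdD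
  have hcu : Continuous u := by rw [hu]; fun_prop
  have hcu' : Continuous u' := by rw [hu']; fun_prop
  have hL : ∀ x ∈ Set.Icc (0:ℝ) 1, (u' x)^2 * (σ x)^2 * μ x ≤ D^2 * (u' x)^2 := by
    intro x hx
    have h1 : (σ x)^2 * μ x ≤ D * D :=
      mul_le_mul (hσD x hx) (hμD x hx) (hd.le.trans (hμd x hx)) hD.le
    nlinarith [mul_le_mul_of_nonneg_left h1 (sq_nonneg (u' x))]
  have i1 := aux_int_s10 (fun x => (u' x)^2 * (σ x)^2 * μ x) (fun x => D^2 * (u' x)^2)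
    (by have := hcu'.measurable; fun_prop) (by fun_prop)
    (fun x hx => mul_nonneg (by positivity) (hd.le.trans (hμd x hx))) hL
  have i2 := aux_int_s10 (fun x => (u x)^2 * μ x) (fun x => (u x)^2 * D)
    (by have := hcu.measurable; fun_prop) (by fun_prop)
    (fun x hx => mul_nonneg (by positivity) (hd.le.trans (hμd x hx)))
    (fun x hx => mul_le_mul_of_nonneg_left (hμD x hx) (sq_nonneg _))
  have j1 : IntervalIntegrable (fun x => (u' x)^2) MeasureTheory.volume 0 1 :=
    Continuous.intervalIntegrable (by fun_prop) _ _
  have j2 : IntervalIntegrable (fun x => (u x)^2) MeasureTheory.volume 0 1 :=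
    Continuous.intervalIntegrable (by fun_prop) _ _
  have A := intervalIntegral.integral_mono_on zero_le_one i1 (j1.const_mul (D^2)) hL
  have B := intervalIntegral.integral_mono_on zero_le_one (j2.mul_const d) i2
    (fun x hx => mul_le_mul_of_nonneg_left (hμd x hx) (sq_nonneg (u x)))
  have C : 0 ≤ ∫ x in (0:ℝ)..1, (4 * Real.pi^2 * (u x)^2 - (u' x)^2) := by
    rw [hu, hu']
    simp only
    rw [aux_val]
    positivity
  rw [intervalIntegral.integral_sub (j2.const_mul _) j1,
    intervalIntegral.integral_const_mul] at C
  rw [intervalIntegral.integral_const_mul] at A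
  rw [intervalIntegral.integral_mul_const] at B
  calc _ ≤ _ := A
    _ ≤ D^2 * (4 * Real.pi^2 * ∫ x in (0:ℝ)..1, (u x)^2) :=
        mul_le_mul_of_nonneg_left (by linarith) (by positivity)
    _ = (4 * Real.pi^2 * D^2 / d) * ((∫ x in (0:ℝ)..1, (u x)^2) * d) := by field_simp
    _ ≤ _ := mul_le_mul_of_nonneg_left B (by positivity)
end
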